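/- arXiv:1111.7106 — 5 statements merged into one kernel-verified Lean document; each statement's English description precedes it below -/
import Mathlib

section
/- Let X be a càdlàg function from [0,∞) to ℝⁿ and fix i ∈ {1,…,n}. Suppose that for every a ∈ [0,∞)ⁿ one has lim_{t→∞} (Wᵃ_i(t) − W⁰_i(t)) = 0, where (Wᶜ, Lᶜ) denotes the unique solution pair of the Skorohod problem for c + X. Then sup_{t≥0} (R⁻¹ M(X)(t))_i = ∞, and consequently there exists j ∈ {1,…,n} with liminf_{t→∞} X_j(t) = −∞. -/
/-!
Suppose `(R⁻¹ M(X))_i ≤ K` on `[0, ∞)`. Each regulator satisfies `L_j ≤ M_j(X) + (Pᵀ L)_j`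
(`regulator_le`), because above that level `W_j > 0` and `L_j` cannot increase. Hence `R L ≤ M(X)`,
and as `R⁻¹ ≥ 0` (`resolvent_nonneg`, via the Neumann series) `L ≤ R⁻¹ M(X)` (`regulator_bound`).
In particular `L⁰_i ≤ K`.

Every `j` with `(R⁻¹)_{ij} > 0` has `M_j(X)` bounded, so there is a start `a`, with `a_i ≥ K + 1`,
for which `a_j + X_j ≥ 0` for all those `j`. Then `(R⁻¹ M(a + X))_i = 0`, and because
`Pᵀ R⁻¹ = R⁻¹ - I` also `(Pᵀ Lᵃ)_i = 0`. It follows that `Wᵃ_i - W⁰_i ≥ a_i - L⁰_i ≥ 1` at all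
times, which contradicts insensitivity. So `(R⁻¹ M(X))_i` is unbounded, hence so is some
`M_j(X)`; since a càdlàg function is bounded on compact intervals
(`Cadlag.bddAbove`), `X_j` must be unbounded below near infinity.
-/

open MeasureTheory Filter Topology

open Classical in
noncomputable def lsMeasure (f : ℝ → ℝ) : Measure ℝ :=
  if h : Monotone f ∧ ∀ x, ContinuousWithinAt f (Set.Ici x) x then
    StieltjesFunction.measure ⟨f, h.1, h.2⟩
  else 0

noncomputable def extZero (f : ℝ → ℝ) : ℝ → ℝ := fun t => if t < 0 then 0 else f t

def Cadlag {n : ℕ} (X : ℝ → Fin n → ℝ) : Prop :=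
  (∀ t : ℝ, 0 ≤ t → ContinuousWithinAt X (Set.Ici t) t) ∧
  (∀ t : ℝ, 0 < t → ∃ l : Fin n → ℝ, Filter.Tendsto X (nhdsWithin t (Set.Iio t)) (nhds l))

structure IsSolutionPair {n : ℕ} (R : Matrix (Fin n) (Fin n) ℝ)
    (X W L : ℝ → Fin n → ℝ) : Prop where
  eqn : ∀ t : ℝ, 0 ≤ t → W t = X t + R.mulVec (L t)
  nonnegL : ∀ (i : Fin n) (t : ℝ), 0 ≤ t → 0 ≤ L t i
  monoL : ∀ i : Fin n, MonotoneOn (fun t => L t i) (Set.Ici (0 : ℝ))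
  rcL : ∀ (i : Fin n) (t : ℝ), 0 ≤ t → ContinuousWithinAt (fun s => L s i) (Set.Ici t) t
  nonnegW : ∀ (i : Fin n) (t : ℝ), 0 ≤ t → 0 ≤ W t i
  flat : ∀ i : Fin n, lsMeasure (extZero fun t => L t i) {t : ℝ | 0 ≤ t ∧ 0 < W t i} = 0
/-- Running negative-part process M(X). -/
noncomputable def Mfun {n : ℕ} (X : ℝ → Fin n → ℝ) (t : ℝ) : Fin n → ℝ :=
  fun i => sSup ((fun s => max (-(X s i)) 0) '' Set.Icc 0 t)

/-! ### Nonnegative matrices and the Neumann series -/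

/-- If `Q ≥ 0` and `Q ^ k → 0`, then `1 - Q` is invertible and its inverse, the limit of the
partial sums `∑ Q ^ k`, is entrywise nonnegative. -/
theorem resolvent_nonneg {n : ℕ} (Q : Matrix (Fin n) (Fin n) ℝ) (hQ : ∀ i j, 0 ≤ Q i j)
    (hpow : Tendsto (fun k : ℕ => Q ^ k) atTop (𝓝 0)) :
    IsUnit (1 - Q).det ∧ ∀ i j, 0 ≤ (1 - Q)⁻¹ i j := by
  have hone : Tendsto (fun k : ℕ => 1 - Q ^ k) atTop (𝓝 1) := by
    simpa using (tendsto_const_nhds (x := (1 : Matrix (Fin n) (Fin n) ℝ))).sub hpow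
  have hdet : Tendsto (fun k : ℕ => (1 - Q ^ k).det) atTop (𝓝 1) := by
    have h := ((continuous_id.matrix_det (A := fun M : Matrix (Fin n) (Fin n) ℝ => M)).tendsto
      1).comp hone
    simpa [Function.comp_def] using h
  obtain ⟨N, hN⟩ := (hdet.eventually_ne one_ne_zero).exists
  have hunit : IsUnit (1 - Q).det := by
    rw [← geom_sum_mul_neg, Matrix.det_mul] at hN
    exact (right_ne_zero_of_mul hN).isUnit
  refine ⟨hunit, fun i j => ?_⟩
  have hpownn : ∀ k : ℕ, ∀ i j, 0 ≤ (Q ^ k) i j := by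
    intro k
    induction k with
    | zero =>
      intro i j
      rw [pow_zero, Matrix.one_apply]
      split_ifs <;> norm_num
    | succ k ih =>
      intro i j
      rw [pow_succ, Matrix.mul_apply]
      exact Finset.sum_nonneg fun l _ => mul_nonneg (ih i l) (hQ l j)
  have hlim : Tendsto (fun k : ℕ => (1 - Q ^ k) * (1 - Q)⁻¹) atTop (𝓝 ((1 - Q)⁻¹)) := by
    have h := hone.mul (tendsto_const_nhds (x := ((1 - Q)⁻¹ : Matrix (Fin n) (Fin n) ℝ)))
    rwa [one_mul] at h
  have hentry : Tendsto (fun k : ℕ => ((1 - Q ^ k) * (1 - Q)⁻¹) i j) atTop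
      (𝓝 ((1 - Q)⁻¹ i j)) :=
    (continuous_id.matrix_elem i j).continuousAt.tendsto.comp hlim
  refine ge_of_tendsto' hentry fun k => ?_
  rw [← geom_sum_mul_neg, Matrix.mul_nonsing_inv_cancel_right _ _ hunit, Matrix.sum_apply]
  exact Finset.sum_nonneg fun l _ => hpownn l i j

theorem mulVec_nonneg_apply {n : ℕ} {A : Matrix (Fin n) (Fin n) ℝ} {i : Fin n}
    (hA : ∀ j, 0 ≤ A i j) {v : Fin n → ℝ} (hv : ∀ j, 0 ≤ v j) : 0 ≤ A.mulVec v i := by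
  rw [Matrix.mulVec, dotProduct]
  exact Finset.sum_nonneg fun j _ => mul_nonneg (hA j) (hv j)

theorem mulVec_le_mulVec_apply {n : ℕ} {A : Matrix (Fin n) (Fin n) ℝ} {i : Fin n}
    (hA : ∀ j, 0 ≤ A i j) {v w : Fin n → ℝ} (hvw : ∀ j, v j ≤ w j) :
    A.mulVec v i ≤ A.mulVec w i := by
  rw [Matrix.mulVec, Matrix.mulVec, dotProduct, dotProduct]
  exact Finset.sum_le_sum fun j _ => mul_le_mul_of_nonneg_left (hvw j) (hA j)

/-! ### The running negative part of a càdlàg function -/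

theorem Cadlag.bddAbove {n : ℕ} {X : ℝ → Fin n → ℝ} (hX : Cadlag X) (j : Fin n) (t : ℝ) :
    BddAbove ((fun s => max (-(X s j)) 0) '' Set.Icc 0 t) := by
  -- Local boundedness on both sides of each point, glued by compactness of `[0, t]`.
  refine isCompact_Icc.induction_on (p := fun S => BddAbove ((fun s => max (-(X s j)) 0) '' S))
    (by simp) (fun S T hST hT => hT.mono (Set.image_mono hST))
    (fun S T hS hT => by rw [Set.image_union]; exact hS.union hT) ?_
  have key : ∀ (F : Filter ℝ) (l : Fin n → ℝ), Tendsto X F (𝓝 l) →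
      ∃ S ∈ F, BddAbove ((fun s => max (-(X s j)) 0) '' S) := by
    intro F l hl
    have h1 : Tendsto (fun s => max (-(X s j)) 0) F (𝓝 (max (-(l j)) 0)) :=
      ((tendsto_pi_nhds.1 hl j).neg).max tendsto_const_nhds
    refine ⟨_, h1.eventually_le_const (lt_add_one _), max (-(l j)) 0 + 1, ?_⟩
    rintro _ ⟨s, hs, rfl⟩
    exact hs
  intro s hs
  obtain ⟨S, hS, hSb⟩ := key _ _ (hX.1 s hs.1)
  rcases hs.1.eq_or_lt with h0 | h0
  · refine ⟨S, nhdsWithin_mono s ?_ hS, hSb⟩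
    intro x hx
    rw [← h0]
    exact hx.1
  · obtain ⟨l, hl⟩ := hX.2 s h0
    obtain ⟨T, hT, hTb⟩ := key _ _ hl
    refine ⟨T ∪ S, mem_nhdsWithin_of_mem_nhds ?_, by rw [Set.image_union]; exact hTb.union hSb⟩
    rw [← nhdsLT_sup_nhdsGE s]
    exact ⟨mem_of_superset hT Set.subset_union_left, mem_of_superset hS Set.subset_union_right⟩

theorem Cadlag.const_add {n : ℕ} {X : ℝ → Fin n → ℝ} (hX : Cadlag X) (c : Fin n → ℝ) :
    Cadlag fun t => c + X t :=
  ⟨fun t ht => continuousWithinAt_const.add (hX.1 t ht), fun t ht =>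
    let ⟨l, hl⟩ := hX.2 t ht
    ⟨c + l, tendsto_const_nhds.add hl⟩⟩

theorem Cadlag.neg_le_Mfun {n : ℕ} {X : ℝ → Fin n → ℝ} (hX : Cadlag X) (j : Fin n) {s t : ℝ}
    (hs : 0 ≤ s) (hst : s ≤ t) : -(X s j) ≤ Mfun X t j :=
  (le_max_left _ _).trans (le_csSup (hX.bddAbove j t) ⟨s, ⟨hs, hst⟩, rfl⟩)

theorem Mfun_nonneg {n : ℕ} (X : ℝ → Fin n → ℝ) (t : ℝ) (j : Fin n) : 0 ≤ Mfun X t j := by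
  apply Real.sSup_nonneg
  rintro _ ⟨s, _, rfl⟩
  exact le_max_right _ _

theorem Mfun_le {n : ℕ} {X : ℝ → Fin n → ℝ} {t : ℝ} {j : Fin n} {C : ℝ} (hC : 0 ≤ C)
    (h : ∀ s, 0 ≤ s → s ≤ t → -(X s j) ≤ C) : Mfun X t j ≤ C := by
  apply Real.sSup_le _ hC
  rintro _ ⟨s, hs, rfl⟩
  exact max_le (h s hs.1 hs.2) hC

/-! ### Bounds on the regulator -/

/-- A Stieltjes function that exceeds the level `B ≥ 0` at time `t`, and vanishes on the
negative axis, charges the part of `[0, t]` on which it exceeds `B`. -/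
theorem measure_superlevel_ne_zero (f : StieltjesFunction ℝ) (hneg : ∀ s < 0, f s = 0)
    {B t : ℝ} (hB : 0 ≤ B) (ht : B < f t) :
    f.measure {s | s ≤ t ∧ B < f s} ≠ 0 := by
  set S : Set ℝ := {s | s ≤ t ∧ B < f s} with hS
  have htS : t ∈ S := ⟨le_rfl, ht⟩
  have hbdd : BddBelow S := ⟨0, fun s hs => by
    by_contra! h
    have := hs.2
    rw [hneg s h] at this
    linarith⟩
  have hlow : ∀ s < sInf S, f s ≤ B := by
    intro s hs
    by_contra! h
    have : s ∈ S := ⟨(hs.trans_le (csInf_le hbdd htS)).le, h⟩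
    exact absurd (csInf_le hbdd this) (not_le.2 hs)
  have hup : ∀ s, sInf S < s → s ≤ t → s ∈ S := by
    intro s hs hst
    obtain ⟨r, hr, hrs⟩ := exists_lt_of_csInf_lt ⟨t, htS⟩ hs
    exact ⟨hst, hr.2.trans_le (f.mono hrs.le)⟩
  by_cases hmem : sInf S ∈ S
  -- The level is crossed by a jump at `sInf S`, which has to be included.
  · have hsub : Set.Icc (sInf S) t ⊆ S := fun s hs => by
      rcases hs.1.eq_or_lt with h | h
      · rw [← h]; exact hmem
      · exact hup s h hs.2
    have hl : Function.leftLim f (sInf S) ≤ B :=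
      le_of_tendsto (f.mono.tendsto_leftLim _)
        (eventually_nhdsWithin_of_forall fun s hs => hlow s hs)
    intro h0
    have := measure_mono_null hsub h0
    rw [StieltjesFunction.measure_Icc, ENNReal.ofReal_eq_zero] at this
    linarith
  · have hsub : Set.Ioc (sInf S) t ⊆ S := fun s hs => hup s hs.1 hs.2
    have hl : f (sInf S) ≤ B := by
      by_contra! h
      exact hmem ⟨csInf_le hbdd htS, h⟩
    intro h0
    have := measure_mono_null hsub h0
    rw [StieltjesFunction.measure_Ioc, ENNReal.ofReal_eq_zero] at this
    linarith

/-- For a solution pair the extended regulator is monotone and right-continuous, so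
`lsMeasure` is the genuine Lebesgue–Stieltjes measure. -/
theorem IsSolutionPair.regular {n : ℕ} {R : Matrix (Fin n) (Fin n) ℝ}
    {X W L : ℝ → Fin n → ℝ} (h : IsSolutionPair R X W L) (j : Fin n) :
    Monotone (extZero fun t => L t j) ∧
      ∀ x, ContinuousWithinAt (extZero fun t => L t j) (Set.Ici x) x := by
  constructor
  · intro x y hxy
    unfold extZero
    split_ifs with hx hy hy
    · exact le_rfl
    · exact h.nonnegL j y (not_lt.1 hy)
    · linarith
    · exact h.monoL j (not_lt.1 hx) (not_lt.1 hy) hxy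
  · intro x
    rcases lt_or_ge x 0 with hx | hx
    · apply ContinuousAt.continuousWithinAt
      refine (continuousAt_const (y := (0 : ℝ))).congr ?_
      filter_upwards [Iio_mem_nhds hx] with y hy
      exact (if_pos hy).symm
    · refine (h.rcL j x hx).congr (fun y hy => ?_) ?_
      · exact if_neg (not_lt.2 (hx.trans hy))
      · exact if_neg (not_lt.2 hx)

/-- One-dimensional Skorohod estimate, coordinate by coordinate. -/
theorem IsSolutionPair.regulator_le {n : ℕ} {Q : Matrix (Fin n) (Fin n) ℝ}
    (hQ : ∀ i j, 0 ≤ Q i j) {X W L : ℝ → Fin n → ℝ} (hX : Cadlag X)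
    (h : IsSolutionPair (1 - Q) X W L) {t : ℝ} (ht : 0 ≤ t) (j : Fin n) :
    L t j ≤ Mfun X t j + Q.mulVec (L t) j := by
  by_contra! hlt
  set B := Mfun X t j + Q.mulVec (L t) j with hBdef
  have hQmono : ∀ s, 0 ≤ s → s ≤ t → Q.mulVec (L s) j ≤ Q.mulVec (L t) j := fun s hs hst =>
    mulVec_le_mulVec_apply (hQ j) fun k => h.monoL k hs ht hst
  have hB : 0 ≤ B := add_nonneg (Mfun_nonneg X t j)
    (mulVec_nonneg_apply (hQ j) fun k => h.nonnegL k t ht)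
  have hreg := h.regular j
  let f : StieltjesFunction ℝ := ⟨extZero fun t => L t j, hreg.1, hreg.2⟩
  have hflat := h.flat j
  rw [lsMeasure, dif_pos hreg] at hflat
  have hfneg : ∀ s < 0, f s = 0 := fun s hs => if_pos hs
  have hfpos : ∀ s, 0 ≤ s → f s = L s j := fun s hs => if_neg (not_lt.2 hs)
  refine measure_superlevel_ne_zero f hfneg hB (t := t) (by rw [hfpos t ht]; exact hlt)
    (measure_mono_null ?_ hflat)
  rintro s ⟨hst, hs⟩
  have hs0 : 0 ≤ s := by
    by_contra! hneg
    rw [hfneg s hneg] at hs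
    linarith
  rw [hfpos s hs0] at hs
  refine ⟨hs0, ?_⟩
  have hW : W s j = X s j + (L s j - Q.mulVec (L s) j) := by
    rw [h.eqn s hs0, Matrix.sub_mulVec, Matrix.one_mulVec]
    rfl
  have := hX.neg_le_Mfun j hs0 hst
  have := hQmono s hs0 hst
  linarith

/-- The bounds `L ≤ R⁻¹ M(X)` and `Q L ≤ R⁻¹ M(X)` for `R = 1 - Q`; the second comes from
`Q R⁻¹ = R⁻¹ - 1`. -/
theorem IsSolutionPair.regulator_bound {n : ℕ} {Q : Matrix (Fin n) (Fin n) ℝ}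
    (hQ : ∀ i j, 0 ≤ Q i j) (hunit : IsUnit (1 - Q).det) (hinv : ∀ i j, 0 ≤ (1 - Q)⁻¹ i j)
    {X W L : ℝ → Fin n → ℝ} (hX : Cadlag X)
    (h : IsSolutionPair (1 - Q) X W L) {t : ℝ} (ht : 0 ≤ t) (i : Fin n) :
    L t i ≤ (1 - Q)⁻¹.mulVec (Mfun X t) i ∧
      Q.mulVec (L t) i ≤ (1 - Q)⁻¹.mulVec (Mfun X t) i := by
  have hL : ∀ j, L t j ≤ (1 - Q)⁻¹.mulVec (Mfun X t) j := by
    intro j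
    have h1 : (1 - Q)⁻¹.mulVec ((1 - Q).mulVec (L t)) j = L t j := by
      rw [Matrix.mulVec_mulVec, Matrix.nonsing_inv_mul _ hunit, Matrix.one_mulVec]
    rw [← h1]
    refine mulVec_le_mulVec_apply (hinv j) fun k => ?_
    have := h.regulator_le hQ hX ht k
    rw [Matrix.sub_mulVec, Matrix.one_mulVec, Pi.sub_apply]
    linarith
  refine ⟨hL i, ?_⟩
  set v := (1 - Q)⁻¹.mulVec (Mfun X t) with hv
  have h1 : Q.mulVec (L t) i ≤ Q.mulVec v i :=
    mulVec_le_mulVec_apply (hQ i) hL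
  have h2 : (1 - Q).mulVec v i = Mfun X t i := by
    rw [hv, Matrix.mulVec_mulVec, Matrix.mul_nonsing_inv _ hunit, Matrix.one_mulVec]
  rw [Matrix.sub_mulVec, Matrix.one_mulVec, Pi.sub_apply] at h2
  have := Mfun_nonneg X t i
  linarith

/-! ### Unboundedness -/

theorem liminf_eq_bot_of_Mfun_unbounded {n : ℕ} {X : ℝ → Fin n → ℝ} (hX : Cadlag X)
    {j : Fin n} (hM : ∀ C : ℝ, ∃ t, C < Mfun X t j) :
    Filter.liminf (fun t => (X t j : EReal)) Filter.atTop = ⊥ := by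
  by_contra hne
  obtain ⟨c, -, hc⟩ := EReal.lt_iff_exists_real_btwn.1 (bot_lt_iff_ne_bot.2 hne)
  obtain ⟨T, hT⟩ := eventually_atTop.1 (eventually_lt_of_lt_liminf hc)
  obtain ⟨t, ht⟩ := hM (max (max (-c) (Mfun X T j)) 0)
  refine absurd (Mfun_le (le_max_right _ _) fun s hs _ => ?_) (not_le.2 ht)
  rcases le_total s T with hsT | hsT
  · exact (hX.neg_le_Mfun j hs hsT).trans ((le_max_right _ _).trans (le_max_left _ _))
  · have : c < X s j := EReal.coe_lt_coe_iff.1 (hT s hsT)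
    exact (neg_le_neg this.le).trans ((le_max_left _ _).trans (le_max_left _ _))

/-- Necessary condition: insensitivity in coordinate i forces (R⁻¹M(X))_i to be unbounded,
hence liminf X_j = -∞ for some j. Here (𝒲 c, 𝒧 c) is the unique solution pair for c + X. -/
theorem skorohod_necessary_condition_insensitivity
    {n : ℕ} (hn : 0 < n) (P : Matrix (Fin n) (Fin n) ℝ)
    (hPnonneg : ∀ i j, 0 ≤ P i j)
    (hPdiag : ∀ i, P i i = 0)
    (hPpow : Filter.Tendsto (fun k : ℕ => P ^ k) Filter.atTop (nhds 0))
    (X : ℝ → Fin n → ℝ) (hX : Cadlag X) (i : Fin n)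
    (𝒲 𝒧 : (Fin n → ℝ) → ℝ → Fin n → ℝ)
    (hsol : ∀ c : Fin n → ℝ, 0 ≤ c →
      IsSolutionPair (1 - P.transpose) (fun t => c + X t) (𝒲 c) (𝒧 c))
    (huniq : ∀ c : Fin n → ℝ, 0 ≤ c → ∀ W L : ℝ → Fin n → ℝ,
      IsSolutionPair (1 - P.transpose) (fun t => c + X t) W L →
      ∀ t : ℝ, 0 ≤ t → W t = 𝒲 c t ∧ L t = 𝒧 c t)
    (hconv : ∀ a : Fin n → ℝ, 0 ≤ a →
      Filter.Tendsto (fun t => 𝒲 a t i - 𝒲 0 t i) Filter.atTop (nhds 0)) :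
    (⨆ t ∈ Set.Ici (0 : ℝ), ((1 - P.transpose)⁻¹.mulVec (Mfun X t) i : EReal)) = ⊤ ∧
    ∃ j : Fin n, Filter.liminf (fun t => (X t j : EReal)) Filter.atTop = ⊥ := by
  have hQ : ∀ i j, 0 ≤ P.transpose i j := fun i j => hPnonneg j i
  have hQpow : Tendsto (fun k : ℕ => P.transpose ^ k) atTop (𝓝 0) := by
    have := ((continuous_id.matrix_transpose
      (A := fun M : Matrix (Fin n) (Fin n) ℝ => M)).tendsto 0).comp hPpow
    simpa [Function.comp_def, Matrix.transpose_pow] using this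
  obtain ⟨hunit, hinv⟩ := resolvent_nonneg _ hQ hQpow
  set Q := P.transpose with hQdef
  have hterm : ∀ (Y : ℝ → Fin n → ℝ) t j, 0 ≤ (1 - Q)⁻¹ i j * Mfun Y t j := fun Y t j =>
    mul_nonneg (hinv i j) (Mfun_nonneg Y t j)
  -- Insensitivity is incompatible with any finite bound on `(R⁻¹ M(X))_i`.
  have hunb : ∀ K : ℝ, 0 ≤ K → ∃ t, 0 ≤ t ∧ K < (1 - Q)⁻¹.mulVec (Mfun X t) i := by
    intro K hK
    by_contra! hbd
    set a : Fin n → ℝ := fun j => K / (1 - Q)⁻¹ i j + (K + 1) with ha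
    have ha0 : 0 ≤ a := fun j => add_nonneg (div_nonneg hK (hinv i j)) (by linarith)
    have hai : K + 1 ≤ a i := le_add_of_nonneg_left (div_nonneg hK (hinv i i))
    have hzero : ∀ t, 0 ≤ t → (1 - Q)⁻¹.mulVec (Mfun (fun t => a + X t) t) i = 0 := by
      intro t ht
      rw [Matrix.mulVec, dotProduct]
      refine Finset.sum_eq_zero fun j _ => ?_
      rcases (hinv i j).eq_or_lt with h0 | h0
      · rw [← h0, zero_mul]
      · have hMj : Mfun X t j ≤ K / (1 - Q)⁻¹ i j := by
          rw [le_div_iff₀ h0, mul_comm]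
          have hsum := hbd t ht
          rw [Matrix.mulVec, dotProduct] at hsum
          exact (Finset.single_le_sum (fun k _ => hterm X t k) (Finset.mem_univ j)).trans hsum
        have : Mfun (fun t => a + X t) t j ≤ 0 := by
          refine Mfun_le le_rfl fun s hs hst => ?_
          have := hX.neg_le_Mfun j hs hst
          simp only [Pi.add_apply, ha]
          linarith
        rw [le_antisymm this (Mfun_nonneg _ t j), mul_zero]
    have hge : ∀ t, 0 ≤ t → 1 ≤ 𝒲 a t i - 𝒲 0 t i := by
      intro t ht
      have ea := congrFun ((hsol a ha0).eqn t ht) i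
      have e0 := congrFun ((hsol 0 le_rfl).eqn t ht) i
      simp only [Matrix.sub_mulVec, Matrix.one_mulVec, Pi.add_apply, Pi.sub_apply,
        Pi.zero_apply] at ea e0
      have ba := ((hsol a ha0).regulator_bound hQ hunit hinv (hX.const_add a) ht i).2
      rw [hzero t ht] at ba
      have b0 := ((hsol 0 le_rfl).regulator_bound hQ hunit hinv (hX.const_add 0) ht i).1
      simp only [zero_add] at b0
      have := hbd t ht
      have := (hsol a ha0).nonnegL i t ht
      have : 0 ≤ Q.mulVec (𝒧 0 t) i :=
        mulVec_nonneg_apply (hQ i) fun k => (hsol 0 le_rfl).nonnegL k t ht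
      linarith
    have : (1 : ℝ) ≤ 0 := ge_of_tendsto (hconv a ha0)
      ((eventually_ge_atTop 0).mono fun t ht => hge t ht)
    linarith
  refine ⟨?_, ?_⟩
  · by_contra hne
    set S := ⨆ t ∈ Set.Ici (0 : ℝ), ((1 - Q)⁻¹.mulVec (Mfun X t) i : EReal) with hS
    obtain ⟨t, ht, hlt⟩ := hunb (max S.toReal 0) (le_max_right _ _)
    have h1 : (((1 - Q)⁻¹.mulVec (Mfun X t) i : ℝ) : EReal) ≤ S :=
      le_iSup₂ (f := fun (t : ℝ) (_ : t ∈ Set.Ici (0 : ℝ)) =>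
        (((1 - Q)⁻¹.mulVec (Mfun X t) i : ℝ) : EReal)) t ht
    have h2 := EReal.coe_le_coe_iff.1 (h1.trans (EReal.le_coe_toReal hne))
    exact absurd ((le_max_left _ _).trans_lt hlt) (not_lt.2 h2)
  · by_contra! hno
    have hbdd : ∀ j, ∃ C : ℝ, ∀ t, Mfun X t j ≤ C := by
      intro j
      by_contra! h
      exact hno j (liminf_eq_bot_of_Mfun_unbounded hX h)
    choose C hC using hbdd
    obtain ⟨t, -, hlt⟩ := hunb (max ((1 - Q)⁻¹.mulVec C i) 0) (le_max_right _ _)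
    refine absurd ((le_max_left _ _).trans_lt hlt) (not_lt.2 ?_)
    exact mulVec_le_mulVec_apply (hinv i) fun j => hC j t
end

section
/- The following are equivalent: (1) for every a ≥ 0, lim_{t→∞} (W_a(t) − W_0(t)) = 0; (2) liminf_{t→∞} X(t) = −∞. -/
/-!
Put `M t = sup_{0 ≤ s ≤ t} max (-X s) 0`, so that `Lone X 0 t = M t`, and, for `a ≥ 0`,
`W_a t - W_0 t = a + L_a t - L_0 t = max (a - M t) 0`. Hence the difference tends to `0` for every
`a` exactly when `M` is unbounded. A càdlàg function is bounded below on each compact interval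
`[0, T]` (`exists_lower_bound`), so `M` is finite and it is unbounded if and only if `X` takes
arbitrarily negative values at arbitrarily late times, i.e. `liminf X = -∞`.
In the proof, the difference is shown to be `0` once `X` has gone below `-a`; conversely, if
`X ≥ -K` throughout, then the difference for `a = K + 1` is always at least `1`.
-/

open MeasureTheory Filter Topology

/-- One-dimensional Skorohod regulator of a + X at zero. -/
noncomputable def Lone (X : ℝ → ℝ) (a : ℝ) (t : ℝ) : ℝ :=
  sSup ((fun s => max (-(a + X s)) 0) '' Set.Icc 0 t)

/-- One-dimensional Skorohod reflection of a + X at zero. -/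
noncomputable def Wone (X : ℝ → ℝ) (a : ℝ) (t : ℝ) : ℝ :=
  a + X t + Lone X a t

/-- A càdlàg function is bounded below on compact intervals: right limits and left limits give a
local lower bound at every point, and compactness makes it uniform. -/
lemma exists_lower_bound (X : ℝ → ℝ)
    (hrc : ∀ t : ℝ, 0 ≤ t → ContinuousWithinAt X (Set.Ici t) t)
    (hll : ∀ t : ℝ, 0 < t → ∃ l : ℝ, Tendsto X (𝓝[<] t) (𝓝 l)) (T : ℝ) :
    ∃ C : ℝ, ∀ s ∈ Set.Icc 0 T, 0 ≤ s → -C ≤ X s := by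
  refine (isCompact_Icc (a := (0 : ℝ)) (b := T)).induction_on
    (p := fun A => ∃ C : ℝ, ∀ s ∈ A, 0 ≤ s → -C ≤ X s) ⟨0, by simp⟩ ?_ ?_ ?_
  · rintro A B hAB ⟨C, hC⟩
    exact ⟨C, fun s hs => hC s (hAB hs)⟩
  · rintro A B ⟨C, hC⟩ ⟨D, hD⟩
    refine ⟨max C D, fun s hs h0 => ?_⟩
    rcases hs with hs | hs
    · linarith [hC s hs h0, le_max_left C D]
    · linarith [hD s hs h0, le_max_right C D]
  · intro t ht
    have hR : ∀ᶠ s in 𝓝[≥] t, X t - 1 < X s :=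
      (hrc t ht.1).eventually_const_lt (by linarith)
    have hL : ∃ c : ℝ, ∀ᶠ s in 𝓝[<] t, 0 ≤ s → c < X s := by
      rcases ht.1.eq_or_lt with h | h
      · refine ⟨0, ?_⟩
        filter_upwards [self_mem_nhdsWithin] with s hs h0
        have : s < t := hs
        linarith
      · obtain ⟨l, hl⟩ := hll t h
        refine ⟨l - 1, ?_⟩
        filter_upwards [hl.eventually_const_lt (show l - 1 < l by linarith)] with s hs _
        exact hs
    obtain ⟨c, hc⟩ := hL
    have hN : ∀ᶠ s in 𝓝 t, 0 ≤ s → -(max (-c) (1 - X t)) ≤ X s := by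
      rw [← nhdsLT_sup_nhdsGE t, eventually_sup]
      constructor
      · filter_upwards [hc] with s hs h0
        linarith [hs h0, le_max_left (-c) (1 - X t)]
      · filter_upwards [hR] with s hs _
        linarith [le_max_right (-c) (1 - X t)]
    exact ⟨_, mem_nhdsWithin_of_mem_nhds hN, _, fun s hs => hs⟩

lemma le_Lone {X : ℝ → ℝ} {a t s C : ℝ} (hC : ∀ s ∈ Set.Icc 0 t, 0 ≤ s → -C ≤ X s)
    (hs : s ∈ Set.Icc 0 t) : max (-(a + X s)) 0 ≤ Lone X a t := by
  refine le_csSup ⟨max (C - a) 0, ?_⟩ ⟨s, hs, rfl⟩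
  rintro _ ⟨u, hu, rfl⟩
  exact max_le_max (by linarith [hC u hu hu.1]) le_rfl

lemma Lone_le {X : ℝ → ℝ} {a t B : ℝ} (ht : 0 ≤ t)
    (h : ∀ s ∈ Set.Icc 0 t, max (-(a + X s)) 0 ≤ B) : Lone X a t ≤ B := by
  refine csSup_le ((Set.nonempty_Icc.2 ht).image _) ?_
  rintro _ ⟨u, hu, rfl⟩
  exact h u hu

/-- In one dimension, W_a(t) - W_0(t) → 0 for every a ≥ 0 if and only if
liminf_{t→∞} X(t) = -∞. -/
theorem one_dim_insensitivity_iff_liminf_bot (X : ℝ → ℝ)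
    (hrc : ∀ t : ℝ, 0 ≤ t → ContinuousWithinAt X (Set.Ici t) t)
    (hll : ∀ t : ℝ, 0 < t → ∃ l : ℝ, Filter.Tendsto X (nhdsWithin t (Set.Iio t)) (nhds l)) :
    (∀ a : ℝ, 0 ≤ a →
        Filter.Tendsto (fun t => Wone X a t - Wone X 0 t) Filter.atTop (nhds 0)) ↔
      Filter.liminf (fun t => (X t : EReal)) Filter.atTop = ⊥ := by
  constructor
  · intro h
    by_contra hne
    obtain ⟨c, -, hc⟩ := EReal.lt_iff_exists_real_btwn.1 (bot_lt_iff_ne_bot.2 hne)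
    obtain ⟨T, hT⟩ := eventually_atTop.1 (eventually_lt_of_lt_liminf hc)
    obtain ⟨C, hC⟩ := exists_lower_bound X hrc hll T
    -- `K` is a global lower bound: `C` handles `[0, T]` and `c` handles `[T, ∞)`.
    obtain ⟨K, hK0, hK⟩ : ∃ K : ℝ, 0 ≤ K ∧ ∀ s, 0 ≤ s → -K ≤ X s := by
      refine ⟨max (max C (-c)) 0, le_max_right _ _, fun s hs => ?_⟩
      have h1 := le_max_left (max C (-c)) 0
      rcases le_total s T with hsT | hsT
      · linarith [hC s ⟨hs, hsT⟩ hs, le_max_left C (-c)]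
      · have := EReal.coe_lt_coe_iff.1 (hT s hsT)
        linarith [le_max_right C (-c)]
    have hlt := (h (K + 1) (by linarith)).eventually_lt_const one_pos
    obtain ⟨t, h1, ht⟩ := (hlt.and (eventually_ge_atTop 0)).exists
    have hLa : 0 ≤ Lone X (K + 1) t :=
      (le_max_right _ _).trans (le_Lone (fun s _ hs => hK s hs) ⟨le_rfl, ht⟩)
    have hL0 : Lone X 0 t ≤ K :=
      Lone_le ht fun s hs => max_le (by linarith [hK s hs.1]) hK0
    simp only [Wone] at h1
    linarith
  · intro h a ha
    obtain ⟨s, hs0, hs⟩ : ∃ s, 0 ≤ s ∧ X s < -a := by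
      by_contra! hcon
      have : ((-a : ℝ) : EReal) ≤ liminf (fun t => (X t : EReal)) atTop := by
        refine le_liminf_of_le (by isBoundedDefault) ?_
        filter_upwards [eventually_ge_atTop 0] with t ht
        exact EReal.coe_le_coe_iff.2 (hcon t ht)
      rw [h, le_bot_iff] at this
      exact EReal.coe_ne_bot _ this
    refine tendsto_const_nhds.congr' ?_
    filter_upwards [eventually_ge_atTop s] with t hst
    have ht : 0 ≤ t := hs0.trans hst
    obtain ⟨C, hC⟩ := exists_lower_bound X hrc hll t
    have h1 : Lone X 0 t ≤ a + Lone X a t := Lone_le ht fun u hu => by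
      have hu' := max_le_iff.1 (le_Lone (a := a) hC hu)
      exact max_le (by linarith [hu'.1]) (by linarith [hu'.2])
    have h2 : Lone X a t ≤ Lone X 0 t - a := Lone_le ht fun u hu => by
      have hu' := (max_le_iff.1 (le_Lone (a := 0) hC hu)).1
      -- the visit below `-a` at time `s` forces `a ≤ L_0 t`
      have hs' := (max_le_iff.1 (le_Lone (a := 0) hC ⟨hs0, hst⟩)).1
      exact max_le (by linarith) (by linarith)
    simp only [Wone]
    linarith
end

section
/- Fix i ∈ {1,…,n} and define β_i(s) = sup{ b_i(s, 0, w) : w ∈ [0,∞)ⁿ } for s ≥ 0 (finite since b is bounded). Let a ∈ [0,∞)ⁿ and let (Wᵃ, Lᵃ) be a solution pair of the Skorohod problem for a + X with coefficients (b, R). Then Lᵃ_i(t) ≥ −a_i − ( X_i(t) + ∫₀ᵗ β_i(s) ds ) for all t ≥ 0; consequently, if liminf_{t→∞} [ X_i(t) + ∫₀ᵗ β_i(s) ds ] = −∞, then lim_{t→∞} Lᵃ_i(t) = +∞. -/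
/-!
Since `p_ii = 0` and `p_ij ≥ 0`, row `i` of `R` is `1` on the diagonal and nonpositive off it, so
the reflection term in the equation for `W_i(t)` is at most `L_i(t) - L_i(0) ≤ L_i(t)`
(`sum_integral_R_le`). As `b_i(u, ℓ, w) ≤ b_i(u, 0, w) ≤ β_i(u)`, the drift term is at most
`∫₀ᵗ β_i` (`integral_b_le`). Inserting both into `0 ≤ W_i(t)` gives the lower bound on `L_i(t)`.
If the liminf is `-∞`, the bound makes `L_i` unbounded, and `L_i` is monotone, so it tends to `+∞`.

Comparing the two drift integrals requires integrability of both integrands. For `β_i`,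
monotonicity in `w` turns the supremum into a countable one (`betaFn_eq_iSup`). For
`b_i(u, L(u-), W(u-))`, the regularity of `W` has to come from its own equation: each integral
there is the indefinite integral of a bounded function and therefore has left limits, even if the
integrand were not measurable (`exists_left_tendsto_integral`). Hence `W` has left limits, and its
left-limit function is a pointwise limit of step functions (`aemeasurable_leftLim`).
-/

open MeasureTheory Filter Topology

/-- The reflection matrix R(s,ℓ,w) = I - P(s,ℓ,w)ᵗ built from the routing coefficients P. -/
def RofP {n : ℕ} (P : ℝ → (Fin n → ℝ) → (Fin n → ℝ) → Matrix (Fin n) (Fin n) ℝ) :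
    ℝ → (Fin n → ℝ) → (Fin n → ℝ) → Matrix (Fin n) (Fin n) ℝ :=
  fun s ℓ w => 1 - (P s ℓ w).transpose

/-- Solution pair of the Skorohod problem for input X with (possibly time- and
state-dependent) coefficients (b, R) on the nonnegative orthant. -/
structure IsSolutionPairBR {n : ℕ}
    (b : ℝ → (Fin n → ℝ) → (Fin n → ℝ) → Fin n → ℝ)
    (R : ℝ → (Fin n → ℝ) → (Fin n → ℝ) → Matrix (Fin n) (Fin n) ℝ)
    (X W L : ℝ → Fin n → ℝ) : Prop where
  nonnegL : ∀ (i : Fin n) (t : ℝ), 0 ≤ t → 0 ≤ L t i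
  monoL : ∀ i : Fin n, MonotoneOn (fun t => L t i) (Set.Ici (0 : ℝ))
  rcL : ∀ (i : Fin n) (t : ℝ), 0 ≤ t → ContinuousWithinAt (fun s => L s i) (Set.Ici t) t
  nonnegW : ∀ (i : Fin n) (t : ℝ), 0 ≤ t → 0 ≤ W t i
  flat : ∀ i : Fin n, lsMeasure (extZero fun t => L t i) {t : ℝ | 0 ≤ t ∧ 0 < W t i} = 0
  eqn : ∀ t : ℝ, 0 ≤ t → ∀ i : Fin n, W t i = X t i
      + (∫ u in Set.Ioc (0 : ℝ) t, b u (Function.leftLim L u) (Function.leftLim W u) i)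
      + ∑ j : Fin n, ∫ u in Set.Ioc (0 : ℝ) t,
          R u (Function.leftLim L u) (Function.leftLim W u) i j
            ∂(lsMeasure (extZero fun s => L s j))

/-- The nonnegative domain [0,∞) × [0,∞)ⁿ × [0,∞)ⁿ of the coefficients. -/
def NonnegDom (n : ℕ) : Set (ℝ × (Fin n → ℝ) × (Fin n → ℝ)) :=
  {x | 0 ≤ x.1 ∧ 0 ≤ x.2.1 ∧ 0 ≤ x.2.2}

/-- Assumptions (A1)–(A3) on the coefficients b and P (with R = I - Pᵗ). -/
structure HypA {n : ℕ} (b : ℝ → (Fin n → ℝ) → (Fin n → ℝ) → Fin n → ℝ)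
    (P : ℝ → (Fin n → ℝ) → (Fin n → ℝ) → Matrix (Fin n) (Fin n) ℝ) : Prop where
  b_bdd : ∃ C : ℝ, ∀ s ℓ w, (s, ℓ, w) ∈ NonnegDom n → ∀ i, |b s ℓ w i| ≤ C
  P_bdd : ∃ C : ℝ, ∀ s ℓ w, (s, ℓ, w) ∈ NonnegDom n → ∀ i j, |P s ℓ w i j| ≤ C
  b_cont : ContinuousOn (fun x : ℝ × (Fin n → ℝ) × (Fin n → ℝ) => b x.1 x.2.1 x.2.2)
    (NonnegDom n)
  P_cont : ContinuousOn (fun x : ℝ × (Fin n → ℝ) × (Fin n → ℝ) => P x.1 x.2.1 x.2.2)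
    (NonnegDom n)
  b_lip : ∃ K : ℝ, ∀ s ℓ ℓ' w w', (s, ℓ, w) ∈ NonnegDom n → (s, ℓ', w') ∈ NonnegDom n →
    ∀ i, |b s ℓ w i - b s ℓ' w' i| ≤ K * (‖ℓ - ℓ'‖ + ‖w - w'‖)
  P_lip : ∃ K : ℝ, ∀ s ℓ ℓ' w w', (s, ℓ, w) ∈ NonnegDom n → (s, ℓ', w') ∈ NonnegDom n →
    ∀ i j, |P s ℓ w i j - P s ℓ' w' i j| ≤ K * (‖ℓ - ℓ'‖ + ‖w - w'‖)
  P_nonneg : ∀ s ℓ w, (s, ℓ, w) ∈ NonnegDom n → ∀ i j, 0 ≤ P s ℓ w i j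
  P_diag : ∀ s ℓ w, (s, ℓ, w) ∈ NonnegDom n → ∀ i, P s ℓ w i i = 0
  unif_spectral : ∃ Pib : Matrix (Fin n) (Fin n) ℝ,
    (∀ s ℓ w, (s, ℓ, w) ∈ NonnegDom n → ∀ i j, P s ℓ w i j ≤ Pib i j) ∧
    Filter.Tendsto (fun k : ℕ => Pib ^ k) Filter.atTop (nhds 0)
  b_anti_l : ∀ s ℓ ℓ' w, (s, ℓ, w) ∈ NonnegDom n → (s, ℓ', w) ∈ NonnegDom n →
    ℓ ≤ ℓ' → b s ℓ' w ≤ b s ℓ w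
  b_mono_w : ∀ s ℓ w w', (s, ℓ, w) ∈ NonnegDom n → (s, ℓ, w') ∈ NonnegDom n →
    w ≤ w' → b s ℓ w ≤ b s ℓ w'
  R_anti_l : ∀ s ℓ ℓ' w, (s, ℓ, w) ∈ NonnegDom n → (s, ℓ', w) ∈ NonnegDom n →
    ℓ ≤ ℓ' → ∀ i j, RofP P s ℓ' w i j ≤ RofP P s ℓ w i j
  R_mono_w : ∀ s ℓ w w', (s, ℓ, w) ∈ NonnegDom n → (s, ℓ, w') ∈ NonnegDom n →
    w ≤ w' → ∀ i j, RofP P s ℓ w i j ≤ RofP P s ℓ w' i j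

/-- (B1): feedforward structure. -/
def HypB1 {n : ℕ} (b : ℝ → (Fin n → ℝ) → (Fin n → ℝ) → Fin n → ℝ)
    (P : ℝ → (Fin n → ℝ) → (Fin n → ℝ) → Matrix (Fin n) (Fin n) ℝ) : Prop :=
  (∀ s ℓ w (i j : Fin n), i < j → RofP P s ℓ w i j = 0) ∧
  (∀ s ℓ w (i : Fin n), RofP P s ℓ w i i = 1) ∧
  (∀ s (ℓ ℓ' w w' : Fin n → ℝ) (i : Fin n),
    (∀ m : Fin n, m ≤ i → ℓ m = ℓ' m ∧ w m = w' m) →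
    b s ℓ w i = b s ℓ' w' i ∧ ∀ j : Fin n, RofP P s ℓ w i j = RofP P s ℓ' w' i j)

/-- (B2): the coefficients do not depend on the ℓ-variable. -/
def HypB2 {n : ℕ} (b : ℝ → (Fin n → ℝ) → (Fin n → ℝ) → Fin n → ℝ)
    (P : ℝ → (Fin n → ℝ) → (Fin n → ℝ) → Matrix (Fin n) (Fin n) ℝ) : Prop :=
  (∀ s ℓ ℓ' w, b s ℓ w = b s ℓ' w) ∧ (∀ s ℓ ℓ' w, P s ℓ w = P s ℓ' w)

/-- Pad a vector in ℝᵏ with zeros to a vector in ℝⁿ. -/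
def pad {k n : ℕ} (_h : k ≤ n) (x : Fin k → ℝ) : Fin n → ℝ :=
  fun j => if hj : (j : ℕ) < k then x ⟨j, hj⟩ else 0

/-- The restriction b_[k] of the drift to the first k coordinates. -/
def bRestr {n : ℕ} (b : ℝ → (Fin n → ℝ) → (Fin n → ℝ) → Fin n → ℝ)
    {k : ℕ} (h : k ≤ n) : ℝ → (Fin k → ℝ) → (Fin k → ℝ) → Fin k → ℝ :=
  fun s ℓ w i => b s (pad h ℓ) (pad h w) (Fin.castLE h i)

/-- The restriction R_[k] of the reflection matrix to the first k coordinates. -/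
def RRestr {n : ℕ} (R : ℝ → (Fin n → ℝ) → (Fin n → ℝ) → Matrix (Fin n) (Fin n) ℝ)
    {k : ℕ} (h : k ≤ n) : ℝ → (Fin k → ℝ) → (Fin k → ℝ) → Matrix (Fin k) (Fin k) ℝ :=
  fun s ℓ w => Matrix.of fun i j => R s (pad h ℓ) (pad h w) (Fin.castLE h i) (Fin.castLE h j)

/-- β_i(s) = sup { b_i(s, 0, w) : w ∈ [0,∞)ⁿ }. -/
noncomputable def betaFn {n : ℕ} (b : ℝ → (Fin n → ℝ) → (Fin n → ℝ) → Fin n → ℝ)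
    (i : Fin n) (s : ℝ) : ℝ :=
  sSup ((fun w => b s 0 w i) '' {w : Fin n → ℝ | 0 ≤ w})

/-! ### Stieltjes measure of a regulator -/

lemma monotone_extZero {f : ℝ → ℝ} (h0 : ∀ t, 0 ≤ t → 0 ≤ f t)
    (hm : MonotoneOn f (Set.Ici 0)) : Monotone (extZero f) := by
  intro x y hxy
  unfold extZero
  split_ifs with hx hy hy
  · exact le_rfl
  · exact h0 y (not_lt.1 hy)
  · linarith
  · exact hm (not_lt.1 hx) (not_lt.1 hy) hxy

lemma rightCont_extZero {f : ℝ → ℝ}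
    (hc : ∀ t, 0 ≤ t → ContinuousWithinAt f (Set.Ici t) t) (x : ℝ) :
    ContinuousWithinAt (extZero f) (Set.Ici x) x := by
  rcases lt_or_ge x 0 with hx | hx
  · have h : extZero f =ᶠ[𝓝 x] fun _ => 0 := by
      filter_upwards [Iio_mem_nhds hx] with y hy
      exact if_pos hy
    exact (continuousAt_const.congr h.symm).continuousWithinAt
  · have h : ∀ y ∈ Set.Ici x, extZero f y = f y := fun y hy =>
      if_neg (not_lt.2 (hx.trans hy))
    exact (hc x hx).congr h (h x Set.self_mem_Ici)

/-- Only the mass on `(0, t]` matters: the possible atom at `0` has mass `f 0`. -/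
lemma lsMeasure_extZero_Ioc {f : ℝ → ℝ} (h0 : ∀ t, 0 ≤ t → 0 ≤ f t)
    (hm : MonotoneOn f (Set.Ici 0))
    (hc : ∀ t, 0 ≤ t → ContinuousWithinAt f (Set.Ici t) t) {t : ℝ} (ht : 0 ≤ t) :
    lsMeasure (extZero f) (Set.Ioc 0 t) = ENNReal.ofReal (f t - f 0) := by
  have h : Monotone (extZero f) ∧ ∀ x, ContinuousWithinAt (extZero f) (Set.Ici x) x :=
    ⟨monotone_extZero h0 hm, rightCont_extZero hc⟩
  rw [lsMeasure, dif_pos h, StieltjesFunction.measure_Ioc]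
  simp [extZero, not_lt.2 ht]

/-! ### Existence of left limits -/

lemma exists_left_tendsto_of_monotoneOn {g : ℝ → ℝ} {u B : ℝ} (hu : 0 < u)
    (hg : MonotoneOn g (Set.Ioo 0 u)) (hB : ∀ t ∈ Set.Ioo 0 u, g t ≤ B) :
    ∃ l, Tendsto g (𝓝[<] u) (𝓝 l) :=
  ⟨_, hg.tendsto_nhdsWithin_Ioo_left (Set.nonempty_Ioo.2 hu)
    ⟨B, by rintro _ ⟨t, ht, rfl⟩; exact hB t ht⟩⟩

/-- The indefinite integral of a bounded function has left limits. Measurability of `f` is not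
assumed: once `f` fails to be integrable on `(0, t₀]`, the Bochner integral takes the value `0`
at all later times. -/
lemma exists_left_tendsto_integral {μ : Measure ℝ} (hμ : ∀ t, μ (Set.Ioc 0 t) ≠ ⊤)
    {f : ℝ → ℝ} {C : ℝ} (hf : ∀ t, 0 < t → |f t| ≤ C) {u : ℝ} (hu : 0 < u) :
    ∃ l, Tendsto (fun t => ∫ s in Set.Ioc 0 t, f s ∂μ) (𝓝[<] u) (𝓝 l) := by
  by_cases hint : ∀ t ∈ Set.Ioo 0 u, IntegrableOn f (Set.Ioc 0 t) μ
  · have hC : ∀ t, IntegrableOn (fun _ => C) (Set.Ioc 0 t) μ := fun t =>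
      integrableOn_const (hμ t)
    have hC0 : 0 ≤ C := (abs_nonneg _).trans (hf u hu)
    -- Both `f + C` and the constant `C` are nonnegative, so their integrals are monotone.
    have key : ∀ g : ℝ → ℝ, (∀ t ∈ Set.Ioo 0 u, IntegrableOn g (Set.Ioc 0 t) μ) →
        (∀ t, 0 < t → 0 ≤ g t ∧ g t ≤ C + C) →
        ∃ l, Tendsto (fun t => ∫ s in Set.Ioc 0 t, g s ∂μ) (𝓝[<] u) (𝓝 l) := by
      intro g hgi hg
      have hmono : ∀ s t : ℝ, s ≤ t → ∀ k : ℝ → ℝ, IntegrableOn k (Set.Ioc 0 t) μ →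
          (∀ t, 0 < t → 0 ≤ k t) →
          ∫ s in Set.Ioc 0 s, k s ∂μ ≤ ∫ s in Set.Ioc 0 t, k s ∂μ := by
        intro s t hst k hk hk0
        refine setIntegral_mono_set hk ?_ (Set.Ioc_subset_Ioc_right hst).eventuallyLE
        exact (ae_restrict_mem measurableSet_Ioc).mono fun x hx => hk0 x hx.1
      refine exists_left_tendsto_of_monotoneOn hu
        (B := ∫ s in Set.Ioc 0 u, (C + C) ∂μ) ?_ ?_
      · intro s _ t ht hst
        exact hmono s t hst g (hgi t ht) fun x hx => (hg x hx).1
      · intro t ht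
        refine (setIntegral_mono_on (hgi t ht) ((hC t).add (hC t)) measurableSet_Ioc
          fun x hx => (hg x hx.1).2).trans ?_
        exact hmono t u ht.2.le (fun _ => C + C) ((hC u).add (hC u)) fun _ _ => by positivity
    obtain ⟨l₁, h₁⟩ := key (fun s => f s + C) (fun t ht => (hint t ht).add (hC t))
      fun t ht => by have := abs_le.1 (hf t ht); constructor <;> linarith
    obtain ⟨l₂, h₂⟩ := key (fun _ => C) (fun t _ => hC t)
      fun t _ => ⟨hC0, by linarith⟩
    refine ⟨l₁ - l₂, (h₁.sub h₂).congr' ?_⟩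
    filter_upwards [Ioo_mem_nhdsLT hu] with t ht
    have hadd : ∫ s in Set.Ioc 0 t, (f s + C) ∂μ
        = (∫ s in Set.Ioc 0 t, f s ∂μ) + ∫ _ in Set.Ioc 0 t, C ∂μ :=
      integral_add (hint t ht) (hC t)
    rw [hadd, add_sub_cancel_right]
  · push Not at hint
    obtain ⟨t₀, ht₀, hn⟩ := hint
    refine ⟨0, tendsto_const_nhds.congr' ?_⟩
    filter_upwards [Ioo_mem_nhdsLT ht₀.2] with t ht
    exact (integral_undef fun h => hn
      (IntegrableOn.mono_set h (Set.Ioc_subset_Ioc_right ht.1.le))).symm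

/-! ### Measurability of left-limit functions -/

/-- A function with left limits need not be measurable a priori, but its left-limit function is:
it is the pointwise limit of the step functions `u ↦ H ((⌈(k+1)u⌉ - 1) / (k+1))`. -/
lemma aemeasurable_leftLim {n : ℕ} {H : ℝ → Fin n → ℝ}
    (hl : ∀ u, 0 < u → ∃ l, Tendsto H (𝓝[<] u) (𝓝 l)) (t : ℝ) :
    AEMeasurable (Function.leftLim H) (volume.restrict (Set.Ioc 0 t)) := by
  refine aemeasurable_of_tendsto_metrizable_ae atTop
    (f := fun (k : ℕ) u => H ((⌈((k : ℝ) + 1) * u⌉ - 1) / ((k : ℝ) + 1))) ?_ ?_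
  · intro k
    have h1 : Measurable fun u : ℝ => ⌈((k : ℝ) + 1) * u⌉ :=
      Int.measurable_ceil.comp (measurable_const.mul measurable_id)
    have h2 : Measurable fun m : ℤ => H (((m : ℝ) - 1) / ((k : ℝ) + 1)) :=
      measurable_from_top
    exact (h2.comp h1).aemeasurable
  · refine (ae_restrict_mem measurableSet_Ioc).mono fun u hu => ?_
    refine (tendsto_leftLim_of_tendsto (hl u hu.1)).comp ?_
    refine tendsto_nhdsWithin_iff.2 ⟨?_, Eventually.of_forall fun k => ?_⟩
    · have hlow : Tendsto (fun k : ℕ => u - 1 / ((k : ℝ) + 1)) atTop (𝓝 u) := by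
        simpa using tendsto_const_nhds.sub (tendsto_one_div_add_atTop_nhds_zero_nat (𝕜 := ℝ))
      refine tendsto_of_tendsto_of_tendsto_of_le_of_le hlow tendsto_const_nhds ?_ ?_
      · intro k
        have hk : (0 : ℝ) < k + 1 := by positivity
        have := Int.le_ceil (((k : ℝ) + 1) * u)
        simp only
        rw [le_div_iff₀ hk, sub_mul, one_div, inv_mul_cancel₀ hk.ne']
        linarith
      · intro k
        have hk : (0 : ℝ) < k + 1 := by positivity
        have := Int.ceil_lt_add_one (((k : ℝ) + 1) * u)
        simp only
        rw [div_le_iff₀ hk]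
        linarith
    · have hk : (0 : ℝ) < k + 1 := by positivity
      have := Int.ceil_lt_add_one (((k : ℝ) + 1) * u)
      rw [Set.mem_Iio, div_lt_iff₀ hk]
      linarith

/-! ### The worst-case drift -/

/-- Extending `b` by retracting onto the nonnegative orthant makes it globally continuous. -/
lemma continuous_b_retract {n : ℕ} {b : ℝ → (Fin n → ℝ) → (Fin n → ℝ) → Fin n → ℝ}
    (hb : ContinuousOn (fun x : ℝ × (Fin n → ℝ) × (Fin n → ℝ) => b x.1 x.2.1 x.2.2)
      (NonnegDom n)) (i : Fin n) :
    Continuous fun x : ℝ × (Fin n → ℝ) × (Fin n → ℝ) =>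
      b (x.1 ⊔ 0) (x.2.1 ⊔ 0) (x.2.2 ⊔ 0) i := by
  have h : Continuous fun x : ℝ × (Fin n → ℝ) × (Fin n → ℝ) =>
      (x.1 ⊔ 0, x.2.1 ⊔ 0, x.2.2 ⊔ 0) := by
    refine (continuous_fst.sup continuous_const).prodMk
      (Continuous.prodMk (continuous_pi fun j => ?_) (continuous_pi fun j => ?_))
    · exact ((continuous_apply j).comp (continuous_fst.comp continuous_snd)).sup continuous_const
    · exact ((continuous_apply j).comp (continuous_snd.comp continuous_snd)).sup continuous_const
  have := hb.comp_continuous h fun x => ⟨le_sup_right, le_sup_right, le_sup_right⟩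
  exact (continuous_apply i).comp this

/-- Since `b` is nondecreasing in `w`, the supremum defining `β_i` may be taken over the countably
many vectors `(k, …, k)`. -/
lemma betaFn_eq_iSup {n : ℕ} {b : ℝ → (Fin n → ℝ) → (Fin n → ℝ) → Fin n → ℝ}
    {P : ℝ → (Fin n → ℝ) → (Fin n → ℝ) → Matrix (Fin n) (Fin n) ℝ}
    (hA : HypA b P) (i : Fin n) {s : ℝ} (hs : 0 ≤ s) :
    betaFn b i s = ⨆ k : ℕ, b s 0 (fun _ => (k : ℝ)) i := by
  obtain ⟨C, hC⟩ := hA.b_bdd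
  have hk : ∀ k : ℕ, (0 : Fin n → ℝ) ≤ fun _ => (k : ℝ) := fun k _ => Nat.cast_nonneg k
  apply le_antisymm
  · refine csSup_le ⟨_, 0, le_refl (0 : Fin n → ℝ), rfl⟩ ?_
    rintro _ ⟨w, hw, rfl⟩
    obtain ⟨k, hwk⟩ := exists_nat_ge ‖w‖
    refine le_trans ?_ (le_ciSup (f := fun k : ℕ => b s 0 (fun _ => (k : ℝ)) i)
      ⟨C, ?_⟩ k)
    · exact hA.b_mono_w s 0 w _ ⟨hs, le_rfl, hw⟩ ⟨hs, le_rfl, hk k⟩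
        (fun j => (le_abs_self _).trans ((norm_le_pi_norm w j).trans hwk)) i
    · rintro _ ⟨m, rfl⟩
      exact (abs_le.1 (hC s 0 _ ⟨hs, le_rfl, hk m⟩ i)).2
  · refine ciSup_le fun k => le_csSup ⟨C, ?_⟩ ⟨_, hk k, rfl⟩
    rintro _ ⟨w, hw, rfl⟩
    exact (abs_le.1 (hC s 0 _ ⟨hs, le_rfl, hw⟩ i)).2

lemma b_le_betaFn {n : ℕ} {b : ℝ → (Fin n → ℝ) → (Fin n → ℝ) → Fin n → ℝ}
    {P : ℝ → (Fin n → ℝ) → (Fin n → ℝ) → Matrix (Fin n) (Fin n) ℝ}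
    (hA : HypA b P) (i : Fin n) {s : ℝ} {ℓ w : Fin n → ℝ}
    (hs : 0 ≤ s) (hℓ : 0 ≤ ℓ) (hw : 0 ≤ w) : b s ℓ w i ≤ betaFn b i s := by
  obtain ⟨C, hC⟩ := hA.b_bdd
  refine (hA.b_anti_l s 0 ℓ w ⟨hs, le_rfl, hw⟩ ⟨hs, hℓ, hw⟩ hℓ i).trans
    (le_csSup ⟨C, ?_⟩ ⟨w, hw, rfl⟩)
  rintro _ ⟨v, hv, rfl⟩
  exact (abs_le.1 (hC s 0 _ ⟨hs, le_rfl, hv⟩ i)).2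

lemma integrableOn_betaFn {n : ℕ} {b : ℝ → (Fin n → ℝ) → (Fin n → ℝ) → Fin n → ℝ}
    {P : ℝ → (Fin n → ℝ) → (Fin n → ℝ) → Matrix (Fin n) (Fin n) ℝ}
    (hA : HypA b P) (i : Fin n) (t : ℝ) : IntegrableOn (betaFn b i) (Set.Ioc 0 t) := by
  obtain ⟨C, hC⟩ := hA.b_bdd
  have hm : Measurable fun s : ℝ =>
      ⨆ k : ℕ, b (s ⊔ 0) ((0 : Fin n → ℝ) ⊔ 0) ((fun _ => (k : ℝ)) ⊔ 0) i :=
    Measurable.iSup fun k => ((continuous_b_retract hA.b_cont i).comp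
      (g := fun x : ℝ × (Fin n → ℝ) × (Fin n → ℝ) => _)
      (f := fun s : ℝ => (s, (0 : Fin n → ℝ), fun _ => (k : ℝ)))
      (by fun_prop)).measurable
  have hk : ∀ k : ℕ, (0 : Fin n → ℝ) ≤ fun _ => (k : ℝ) := fun k _ => Nat.cast_nonneg k
  refine Integrable.of_bound ?_ C ?_
  · refine hm.aestronglyMeasurable.congr ?_
    refine (ae_restrict_mem measurableSet_Ioc).mono fun s hs => ?_
    rw [betaFn_eq_iSup hA i hs.1.le]
    simp [sup_eq_left.2 hs.1.le, sup_eq_left.2 (hk _)]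
  · refine (ae_restrict_mem measurableSet_Ioc).mono fun s hs => abs_le.2 ⟨?_, ?_⟩
    · exact (abs_le.1 (hC s 0 0 ⟨hs.1.le, le_rfl, le_rfl⟩ i)).1.trans
        (b_le_betaFn hA i hs.1.le le_rfl le_rfl)
    · refine csSup_le ⟨_, 0, le_refl (0 : Fin n → ℝ), rfl⟩ ?_
      rintro _ ⟨v, hv, rfl⟩
      exact (abs_le.1 (hC s 0 _ ⟨hs.1.le, le_rfl, hv⟩ i)).2

/-! ### Estimates for a solution pair -/

section SolutionPair

variable {n : ℕ} {b : ℝ → (Fin n → ℝ) → (Fin n → ℝ) → Fin n → ℝ}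
  {P : ℝ → (Fin n → ℝ) → (Fin n → ℝ) → Matrix (Fin n) (Fin n) ℝ}
  {Y W L : ℝ → Fin n → ℝ}

lemma leftLim_exists_L {R : ℝ → (Fin n → ℝ) → (Fin n → ℝ) → Matrix (Fin n) (Fin n) ℝ}
    (hsol : IsSolutionPairBR b R Y W L) {u : ℝ} (hu : 0 < u) :
    ∃ l, Tendsto L (𝓝[<] u) (𝓝 l) := by
  have h : ∀ j, ∃ l, Tendsto (fun t => L t j) (𝓝[<] u) (𝓝 l) := fun j =>
    exists_left_tendsto_of_monotoneOn hu (B := L u j)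
      ((hsol.monoL j).mono fun x hx => hx.1.le)
      fun t ht => hsol.monoL j (Set.mem_Ici.2 ht.1.le) (Set.mem_Ici.2 hu.le) ht.2.le
  choose l hl using h
  exact ⟨l, tendsto_pi_nhds.2 hl⟩

/-- `leftLim` takes the value of the function itself where no left limit exists, so
nonnegativity holds at every `u > 0` without knowing that left limits exist. -/
lemma leftLim_nonneg {H : ℝ → Fin n → ℝ} (h0 : ∀ t, 0 ≤ t → 0 ≤ H t)
    {u : ℝ} (hu : 0 < u) : 0 ≤ Function.leftLim H u := by
  by_cases hl : ∃ l, Tendsto H (𝓝[<] u) (𝓝 l)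
  · refine ge_of_tendsto (tendsto_leftLim_of_tendsto hl) ?_
    filter_upwards [Ioo_mem_nhdsLT hu] with t ht using h0 t ht.1.le
  · rw [leftLim_eq_of_not_tendsto _ hl]
    exact h0 u hu.le

lemma dom_leftLim {R : ℝ → (Fin n → ℝ) → (Fin n → ℝ) → Matrix (Fin n) (Fin n) ℝ}
    (hsol : IsSolutionPairBR b R Y W L) {u : ℝ} (hu : 0 < u) :
    (u, Function.leftLim L u, Function.leftLim W u) ∈ NonnegDom n :=
  ⟨hu.le, leftLim_nonneg (fun t ht j => hsol.nonnegL j t ht) hu,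
    leftLim_nonneg (fun t ht j => hsol.nonnegW j t ht) hu⟩

lemma leftLim_exists_W (hA : HypA b P) (hsol : IsSolutionPairBR b (RofP P) Y W L)
    {u : ℝ} (hu : 0 < u) (hY : ∃ l, Tendsto Y (𝓝[<] u) (𝓝 l)) :
    ∃ l, Tendsto W (𝓝[<] u) (𝓝 l) := by
  obtain ⟨y, hy⟩ := hY
  obtain ⟨C, hC⟩ := hA.b_bdd
  obtain ⟨D, hD⟩ := hA.P_bdd
  have h : ∀ i, ∃ l, Tendsto (fun t => W t i) (𝓝[<] u) (𝓝 l) := by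
    intro i
    obtain ⟨l₁, h₁⟩ := exists_left_tendsto_integral (μ := volume) (by simp)
      (fun t ht => hC _ _ _ (dom_leftLim hsol ht) i) hu
    have h₂ : ∀ j, ∃ l, Tendsto (fun t => ∫ s in Set.Ioc 0 t,
        RofP P s (Function.leftLim L s) (Function.leftLim W s) i j
          ∂(lsMeasure (extZero fun s => L s j))) (𝓝[<] u) (𝓝 l) := by
      intro j
      refine exists_left_tendsto_integral (C := 1 + D) (fun t => ?_) (fun t ht => ?_) hu
      · rcases le_or_gt 0 t with ht | ht
        · rw [lsMeasure_extZero_Ioc (hsol.nonnegL j) (hsol.monoL j) (hsol.rcL j) ht]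
          exact ENNReal.ofReal_ne_top
        · simp [Set.Ioc_eq_empty_of_le ht.le]
      · rw [RofP, Matrix.sub_apply, Matrix.transpose_apply]
        refine (abs_sub _ _).trans (add_le_add ?_ (hD _ _ _ (dom_leftLim hsol ht) j i))
        rw [Matrix.one_apply]
        split_ifs <;> simp
    choose l₂ h₂ using h₂
    refine ⟨_, (((tendsto_pi_nhds.1 hy i).add h₁).add
      (tendsto_finsetSum Finset.univ fun j _ => h₂ j)).congr' ?_⟩
    filter_upwards [Ioo_mem_nhdsLT hu] with t ht
    exact (hsol.eqn t ht.1.le i).symm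
  choose l hl using h
  exact ⟨l, tendsto_pi_nhds.2 hl⟩

lemma integral_b_le (hA : HypA b P) (hsol : IsSolutionPairBR b (RofP P) Y W L)
    (hY : ∀ u, 0 < u → ∃ l, Tendsto Y (𝓝[<] u) (𝓝 l)) (i : Fin n) (t : ℝ) :
    ∫ u in Set.Ioc 0 t, b u (Function.leftLim L u) (Function.leftLim W u) i
      ≤ ∫ u in Set.Ioc 0 t, betaFn b i u := by
  obtain ⟨C, hC⟩ := hA.b_bdd
  refine setIntegral_mono_on ?_ (integrableOn_betaFn hA i t) measurableSet_Ioc fun u hu => ?_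
  · refine Integrable.of_bound ?_ C ?_
    · have hL := aemeasurable_leftLim (fun u hu => leftLim_exists_L hsol hu) t
      have hW := aemeasurable_leftLim (fun u hu => leftLim_exists_W hA hsol hu (hY u hu)) t
      have hm := (continuous_b_retract hA.b_cont i).measurable.comp_aemeasurable
        (aemeasurable_id.prodMk (hL.prodMk hW))
      refine hm.aestronglyMeasurable.congr ?_
      refine (ae_restrict_mem measurableSet_Ioc).mono fun u hu => ?_
      have hd := dom_leftLim hsol hu.1
      simp only [Function.comp, id]
      rw [sup_eq_left.2 hd.1, sup_eq_left.2 hd.2.1, sup_eq_left.2 hd.2.2]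
    · exact (ae_restrict_mem measurableSet_Ioc).mono fun u hu =>
        hC _ _ _ (dom_leftLim hsol hu.1) i
  · have hd := dom_leftLim hsol hu.1
    exact b_le_betaFn hA i hd.1 hd.2.1 hd.2.2

/-- The diagonal entry `1` contributes `L_i(t) - L_i(0)`, and the off-diagonal entries
`-p_ji ≤ 0` contribute nonpositive terms. -/
lemma sum_integral_R_le (hA : HypA b P) (hsol : IsSolutionPairBR b (RofP P) Y W L)
    (i : Fin n) {t : ℝ} (ht : 0 ≤ t) :
    ∑ j : Fin n, ∫ u in Set.Ioc (0 : ℝ) t,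
      RofP P u (Function.leftLim L u) (Function.leftLim W u) i j
        ∂(lsMeasure (extZero fun s => L s j)) ≤ L t i := by
  rw [← Finset.add_sum_erase _ _ (Finset.mem_univ i)]
  have h1 : ∫ u in Set.Ioc (0 : ℝ) t,
      RofP P u (Function.leftLim L u) (Function.leftLim W u) i i
        ∂(lsMeasure (extZero fun s => L s i)) = L t i - L 0 i := by
    rw [setIntegral_congr_fun (g := fun _ => (1 : ℝ)) measurableSet_Ioc fun u hu => by
      simp [RofP, hA.P_diag _ _ _ (dom_leftLim hsol hu.1) i]]
    have hle : L 0 i ≤ L t i := hsol.monoL i Set.self_mem_Ici ht ht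
    simp [Measure.real,
      lsMeasure_extZero_Ioc (hsol.nonnegL i) (hsol.monoL i) (hsol.rcL i) ht, hle]
  have h2 : ∑ j ∈ Finset.univ.erase i, ∫ u in Set.Ioc (0 : ℝ) t,
      RofP P u (Function.leftLim L u) (Function.leftLim W u) i j
        ∂(lsMeasure (extZero fun s => L s j)) ≤ 0 := by
    refine Finset.sum_nonpos fun j hj => setIntegral_nonpos measurableSet_Ioc fun u hu => ?_
    have hne : i ≠ j := (Finset.ne_of_mem_erase hj).symm
    simpa [RofP, Matrix.one_apply_ne hne] using
      hA.P_nonneg _ _ _ (dom_leftLim hsol hu.1) j i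
  have h3 := hsol.nonnegL i 0 le_rfl
  linarith

end SolutionPair

/-- Lemma 3.1(i): the lower bound Lᵃ_i(t) ≥ -a_i - (X_i(t) + ∫₀ᵗ β_i(s) ds), and hence
divergence of Lᵃ_i whenever liminf (X_i(t) + ∫₀ᵗ β_i(s) ds) = -∞. -/
theorem regulator_lower_bound_and_divergence
    {n : ℕ} (hn : 0 < n)
    (b : ℝ → (Fin n → ℝ) → (Fin n → ℝ) → Fin n → ℝ)
    (P : ℝ → (Fin n → ℝ) → (Fin n → ℝ) → Matrix (Fin n) (Fin n) ℝ)
    (hA : HypA b P) (i : Fin n)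
    (X Wa La : ℝ → Fin n → ℝ) (hX : Cadlag X) (a : Fin n → ℝ) (ha : 0 ≤ a)
    (hsol : IsSolutionPairBR b (RofP P) (fun t => a + X t) Wa La) :
    (∀ t : ℝ, 0 ≤ t →
      -(a i) - (X t i + ∫ s in Set.Ioc (0 : ℝ) t, betaFn b i s) ≤ La t i) ∧
    (Filter.liminf
        (fun t => ((X t i + ∫ s in Set.Ioc (0 : ℝ) t, betaFn b i s : ℝ) : EReal))
        Filter.atTop = ⊥ →
      Filter.Tendsto (fun t => La t i) Filter.atTop Filter.atTop) := by
  have hY : ∀ u, 0 < u → ∃ l, Tendsto (fun t => a + X t) (𝓝[<] u) (𝓝 l) := fun u hu => by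
    obtain ⟨l, hl⟩ := hX.2 u hu
    exact ⟨a + l, hl.const_add a⟩
  have hlow : ∀ t : ℝ, 0 ≤ t →
      -(a i) - (X t i + ∫ s in Set.Ioc (0 : ℝ) t, betaFn b i s) ≤ La t i := by
    intro t ht
    have h0 := hsol.nonnegW i t ht
    rw [hsol.eqn t ht i, Pi.add_apply] at h0
    have h1 := integral_b_le hA hsol hY i t
    have h2 := sum_integral_R_le hA hsol i ht
    linarith
  refine ⟨hlow, fun hlim => tendsto_atTop.2 fun M => ?_⟩
  have hfr := frequently_lt_of_liminf_lt (b := ((-(a i) - M : ℝ) : EReal)) (by isBoundedDefault)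
    (hlim ▸ EReal.bot_lt_coe _)
  obtain ⟨t, hlt, ht⟩ := (hfr.and_eventually (eventually_ge_atTop 0)).exists
  have h1 := hlow t ht
  have h2 := EReal.coe_lt_coe_iff.1 hlt
  filter_upwards [eventually_ge_atTop t] with s hs
  have h3 : La t i ≤ La s i := hsol.monoL i ht (Set.mem_Ici.2 (ht.trans hs)) hs
  linarith
end

section
/- Suppose that b and R are functions of the time variable s only (and satisfy (A1)–(A3)). Let X : [0,∞) → ℝⁿ be càdlàg and a ∈ [0,∞)ⁿ, and let (Wᵃ, Lᵃ) and (W⁰, L⁰) be solution pairs of the Skorohod problem, with coefficients (b, R), for a + X and for X respectively. Then the limit lim_{t→∞} (Wᵃ(t) − W⁰(t)) exists in ℝⁿ and is coordinatewise nonnegative. -/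
/-! Write `Z = Wa - W0`. The drift and the input cancel, and `Z` differs from a constant by
`-∫ (I - pᵗ) d(L0 - La)`, where `p` depends on time only. The theorem follows once `Z ≥ 0`,
`L0 - La` is nondecreasing, and `L0 - La` is bounded: then `L0 - La` and the integrals
`∫ pⱼᵢ d(L0ⱼ - Laⱼ)` are bounded and nondecreasing, hence converge.

For the first two claims, call `ρ` dominating if `ρ` and `L0 + ρ - La` are nondecreasing, so that
`dρ` bounds the negative part of the signed measure `d(L0 - La)`; `ρ = La` is an example. Let `M`
be the transpose of the uniform bound of `p`. If `ρ` dominates, then the inflow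
`∑ⱼ ∫ pⱼᵢ d(L0ⱼ - Laⱼ)` decreases on each interval by at most the increment of `(M ρ)ᵢ`
(`integral_comparison`). The one-dimensional comparison `scalar_comparison` deduces that
`M ρ - Z⁻` dominates as well. It considers the last time at which `Z` changes sign: while `Z < 0`
one has `W0 > 0`, so `L0` is constant, and while `Z > 0` one has `Wa > 0`, so `La` is constant.
As `Z⁻` vanishes at `0`, iterating gives dominating functions whose growth up to time `t` is at
most `Mᵏ (La t - La 0)`, which tends to `0`; in the limit `L0 - La` is nondecreasing and
`Z⁻ = 0`.

For boundedness, `Z ≥ 0` says that the growth `d` of `L0 - La` satisfies `0 ≤ d ≤ a + M d`, which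
bounds `d` since `Mᵏ → 0` (`bounded_of_le_add_mulVec`). -/


open MeasureTheory Filter Topology

/-! ### Stieltjes measures of regulators -/

/-- Nondecreasing and right-continuous on `[0,∞)`. -/
structure RCMono (f : ℝ → ℝ) : Prop where
  mono : MonotoneOn f (Set.Ici (0 : ℝ))
  rc : ∀ t : ℝ, 0 ≤ t → ContinuousWithinAt f (Set.Ici t) t

lemma RCMono.add {f g : ℝ → ℝ} (hf : RCMono f) (hg : RCMono g) :
    RCMono (fun t => f t + g t) :=
  ⟨fun _ hs _ ht hst => add_le_add (hf.mono hs ht hst) (hg.mono hs ht hst),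
    fun t ht => (hf.rc t ht).add (hg.rc t ht)⟩

lemma RCMono.const_mul {f : ℝ → ℝ} (hf : RCMono f) {c : ℝ} (hc : 0 ≤ c) :
    RCMono (fun t => c * f t) :=
  ⟨fun _ hs _ ht hst => mul_le_mul_of_nonneg_left (hf.mono hs ht hst) hc,
    fun t ht => (hf.rc t ht).const_mul c⟩

lemma RCMono.add_const {f : ℝ → ℝ} (hf : RCMono f) (c : ℝ) : RCMono (fun t => f t + c) :=
  hf.add ⟨fun _ _ _ _ _ => le_rfl, fun _ _ => continuousWithinAt_const⟩

lemma RCMono.sum {n : ℕ} {f : Fin n → ℝ → ℝ} (hf : ∀ j, RCMono (f j)) :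
    RCMono (fun t => ∑ j, f j t) :=
  ⟨fun _ hs _ ht hst => Finset.sum_le_sum fun j _ => (hf j).mono hs ht hst,
    fun t ht => tendsto_finsetSum _ fun j _ => (hf j).rc t ht⟩

lemma extZero_of_nonneg (f : ℝ → ℝ) {t : ℝ} (ht : 0 ≤ t) : extZero f t = f t := by
  simp [extZero, not_lt.mpr ht]

lemma RCMono.extZero_spec {f : ℝ → ℝ} (hf : RCMono f) (h0 : 0 ≤ f 0) :
    Monotone (extZero f) ∧ ∀ x, ContinuousWithinAt (extZero f) (Set.Ici x) x := by
  constructor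
  · intro s t hst
    unfold extZero
    split_ifs with h1 h2 h2
    · exact le_rfl
    · exact h0.trans (hf.mono Set.self_mem_Ici (not_lt.mp h2) (not_lt.mp h2))
    · linarith
    · exact hf.mono (not_lt.mp h1) (not_lt.mp h2) hst
  · intro x
    rcases lt_or_ge x 0 with hx | hx
    · have : extZero f =ᶠ[𝓝 x] fun _ => 0 := by
        filter_upwards [Iio_mem_nhds hx] with y hy
        simp [extZero, Set.mem_Iio.mp hy]
      exact (continuousAt_const.congr this.symm).continuousWithinAt
    · refine (hf.rc x hx).congr (fun y hy => ?_) (extZero_of_nonneg f hx)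
      exact extZero_of_nonneg f (hx.trans hy)

/-- The Stieltjes function whose measure is `lsMeasure (extZero f)`. -/
noncomputable def RCMono.stieltjes {f : ℝ → ℝ} (hf : RCMono f) (h0 : 0 ≤ f 0) :
    StieltjesFunction ℝ :=
  ⟨extZero f, (hf.extZero_spec h0).1, (hf.extZero_spec h0).2⟩

lemma RCMono.lsMeasure_eq {f : ℝ → ℝ} (hf : RCMono f) (h0 : 0 ≤ f 0) :
    lsMeasure (extZero f) = (hf.stieltjes h0).measure := by
  unfold lsMeasure
  rw [dif_pos (hf.extZero_spec h0)]
  rfl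

lemma RCMono.stieltjes_apply {f : ℝ → ℝ} (hf : RCMono f) (h0 : 0 ≤ f 0) {t : ℝ} (ht : 0 ≤ t) :
    hf.stieltjes h0 t = f t := extZero_of_nonneg f ht

instance lsMeasure_locallyFinite (f : ℝ → ℝ) : IsLocallyFiniteMeasure (lsMeasure f) := by
  unfold lsMeasure
  split_ifs <;> infer_instance

lemma RCMono.measureReal_Ioc {f : ℝ → ℝ} (hf : RCMono f) (h0 : 0 ≤ f 0) {s t : ℝ} (hs : 0 ≤ s)
    (hst : s ≤ t) : (lsMeasure (extZero f)).real (Set.Ioc s t) = f t - f s := by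
  rw [measureReal_def, hf.lsMeasure_eq h0, StieltjesFunction.measure_Ioc,
    hf.stieltjes_apply h0 hs, hf.stieltjes_apply h0 (hs.trans hst), ENNReal.toReal_ofReal]
  exact sub_nonneg.mpr (hf.mono hs (hs.trans hst) hst)

lemma integrableOn_Ioc_lsMeasure (f : ℝ → ℝ) {g : ℝ → ℝ} (hg : ContinuousOn g (Set.Ici 0))
    {s t : ℝ} (hs : 0 ≤ s) : IntegrableOn g (Set.Ioc s t) (lsMeasure f) :=
  ((hg.mono fun _ hu => hs.trans hu.1).integrableOn_compact isCompact_Icc).mono_set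
    Set.Ioc_subset_Icc_self

lemma integral_Ioc_split (f : ℝ → ℝ) {g : ℝ → ℝ} (hg : ContinuousOn g (Set.Ici 0))
    {s t : ℝ} (hs : 0 ≤ s) (hst : s ≤ t) :
    ∫ u in Set.Ioc 0 t, g u ∂(lsMeasure f) =
      (∫ u in Set.Ioc 0 s, g u ∂(lsMeasure f)) + ∫ u in Set.Ioc s t, g u ∂(lsMeasure f) := by
  rw [← Set.Ioc_union_Ioc_eq_Ioc hs hst]
  exact setIntegral_union (Set.Ioc_disjoint_Ioc_of_le le_rfl) measurableSet_Ioc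
    (integrableOn_Ioc_lsMeasure f hg le_rfl) (integrableOn_Ioc_lsMeasure f hg hs)

lemma RCMono.integral_bounds {f g : ℝ → ℝ} (hf : RCMono f) (h0 : 0 ≤ f 0)
    (hg : ContinuousOn g (Set.Ici 0)) {c : ℝ} (hg0 : ∀ u, 0 ≤ u → 0 ≤ g u)
    (hgc : ∀ u, 0 ≤ u → g u ≤ c) {s t : ℝ} (hs : 0 ≤ s) (hst : s ≤ t) :
    0 ≤ ∫ u in Set.Ioc s t, g u ∂(lsMeasure (extZero f)) ∧
    ∫ u in Set.Ioc s t, g u ∂(lsMeasure (extZero f)) ≤ c * (f t - f s) := by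
  constructor
  · exact setIntegral_nonneg measurableSet_Ioc fun u hu => hg0 u (hs.trans hu.1.le)
  · calc ∫ u in Set.Ioc s t, g u ∂(lsMeasure (extZero f))
        ≤ ∫ u in Set.Ioc s t, c ∂(lsMeasure (extZero f)) :=
          setIntegral_mono_on (integrableOn_Ioc_lsMeasure _ hg hs)
            (integrableOn_Ioc_lsMeasure _ continuousOn_const hs) measurableSet_Ioc
            fun u hu => hgc u (hs.trans hu.1.le)
      _ = c * (f t - f s) := by
          rw [setIntegral_const, hf.measureReal_Ioc h0 hs hst, smul_eq_mul, mul_comm]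

/-- The indefinite Stieltjes integral of a bounded nonnegative continuous integrand is again
nondecreasing and right-continuous. -/
lemma RCMono.integral {f g : ℝ → ℝ} (hf : RCMono f) (h0 : 0 ≤ f 0)
    (hg : ContinuousOn g (Set.Ici 0)) {c : ℝ} (hg0 : ∀ u, 0 ≤ u → 0 ≤ g u)
    (hgc : ∀ u, 0 ≤ u → g u ≤ c) :
    RCMono (fun t => ∫ u in Set.Ioc 0 t, g u ∂(lsMeasure (extZero f))) := by
  have key : ∀ s t : ℝ, 0 ≤ s → s ≤ t → _ := fun s t hs hst =>
    hf.integral_bounds h0 hg hg0 hgc hs hst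
  constructor
  · intro s hs t ht hst
    have := key s t hs hst
    simp only
    rw [integral_Ioc_split _ hg hs hst]
    linarith [this.1]
  · intro t ht
    have h1 : Tendsto (fun x => c * (f x - f t)) (𝓝[≥] t) (𝓝 0) := by
      have := ((hf.rc t ht).sub_const (f t)).const_mul c
      simpa [ContinuousWithinAt] using this
    have h2 : Tendsto (fun x => ∫ u in Set.Ioc t x, g u ∂(lsMeasure (extZero f)))
        (𝓝[≥] t) (𝓝 0) := by
      refine tendsto_of_tendsto_of_tendsto_of_le_of_le' tendsto_const_nhds h1 ?_ ?_
      · filter_upwards [self_mem_nhdsWithin] with x hx using (key t x ht hx).1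
      · filter_upwards [self_mem_nhdsWithin] with x hx using (key t x ht hx).2
    have h3 := h2.const_add (∫ u in Set.Ioc 0 t, g u ∂(lsMeasure (extZero f)))
    rw [add_zero] at h3
    refine h3.congr' ?_
    filter_upwards [self_mem_nhdsWithin] with x hx
    exact (integral_Ioc_split _ hg ht hx).symm

/-- If `df ≤ dh + dρ` as measures and `0 ≤ g ≤ c`, then
`∫ g df ≤ ∫ g dh + c (ρ t - ρ s)` on `(s,t]`. -/
lemma integral_comparison {f h ρ g : ℝ → ℝ} (hf : RCMono f) (f0 : 0 ≤ f 0)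
    (hh : RCMono h) (h0 : 0 ≤ h 0) (hρ : RCMono ρ)
    (hG : MonotoneOn (fun t => h t + ρ t - f t) (Set.Ici 0))
    (hg : ContinuousOn g (Set.Ici 0)) {c : ℝ} (hg0 : ∀ u, 0 ≤ u → 0 ≤ g u)
    (hgc : ∀ u, 0 ≤ u → g u ≤ c) {s t : ℝ} (hs : 0 ≤ s) (hst : s ≤ t) :
    ∫ u in Set.Ioc s t, g u ∂(lsMeasure (extZero f)) ≤
      (∫ u in Set.Ioc s t, g u ∂(lsMeasure (extZero h))) + c * (ρ t - ρ s) := by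
  -- Adding a constant to `ρ` makes `ρ` and `h + ρ - f` nonnegative at `0`, so that their
  -- extensions by zero to the negative half-line are monotone.
  set K : ℝ := |ρ 0| + f 0 with hK
  have hρK : RCMono (fun t => ρ t + K) := hρ.add_const K
  have ρK0 : 0 ≤ ρ 0 + K := by linarith [neg_abs_le (ρ 0)]
  have hGK : RCMono (fun t => h t + (ρ t + K) - f t) :=
    ⟨fun s hs t ht hst => by have := hG hs ht hst; simp only at this ⊢; linarith,
      fun t ht => ((hh.rc t ht).add (hρK.rc t ht)).sub (hf.rc t ht)⟩
  have GK0 : 0 ≤ h 0 + (ρ 0 + K) - f 0 := by linarith [neg_abs_le (ρ 0)]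
  have hsum : lsMeasure (extZero f) + lsMeasure (extZero fun t => h t + (ρ t + K) - f t)
      = lsMeasure (extZero h) + lsMeasure (extZero fun t => ρ t + K) := by
    rw [hf.lsMeasure_eq f0, hGK.lsMeasure_eq GK0, hh.lsMeasure_eq h0, hρK.lsMeasure_eq ρK0,
      ← StieltjesFunction.measure_add, ← StieltjesFunction.measure_add]
    congr 1
    ext x
    rw [StieltjesFunction.add_apply, StieltjesFunction.add_apply]
    change extZero f x + extZero (fun t => h t + (ρ t + K) - f t) x =
      extZero h x + extZero (fun t => ρ t + K) x
    unfold extZero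
    split_ifs <;> ring
  have hI : ∀ k : ℝ → ℝ, Integrable g ((lsMeasure k).restrict (Set.Ioc s t)) :=
    fun k => integrableOn_Ioc_lsMeasure k hg hs
  have e := congrArg (fun μ : Measure ℝ => ∫ u in Set.Ioc s t, g u ∂μ) hsum
  simp only [Measure.restrict_add] at e
  rw [integral_add_measure (hI _) (hI _), integral_add_measure (hI _) (hI _)] at e
  have h1 := (hGK.integral_bounds GK0 hg hg0 hgc hs hst).1
  have h2 := (hρK.integral_bounds ρK0 hg hg0 hgc hs hst).2
  have h3 : ρ t + K - (ρ s + K) = ρ t - ρ s := by ring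
  rw [h3] at h2
  linarith

/-! ### One-dimensional comparison -/

/-- A regulator `L` that only grows while `W = 0` barely grows after the last time in `S`, when
`W > 0` off `S`. The supremum of `S` need not be attained; then the mass of the closed interval
from that supremum to `t` vanishes, and points of `S` close to it do the job. -/
lemma flat_last_exit {L W : ℝ → ℝ} (hL : RCMono L) (L0 : 0 ≤ L 0)
    (hflat : lsMeasure (extZero L) {t : ℝ | 0 ≤ t ∧ 0 < W t} = 0)
    {s t : ℝ} (hs : 0 ≤ s) (hst : s ≤ t) (S : Set ℝ) (hsS : s ∈ S)
    (hS : ∀ u, s ≤ u → u ≤ t → u ∉ S → 0 < W u) {ε : ℝ} (hε : 0 < ε) :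
    ∃ u ∈ S, s ≤ u ∧ u ≤ t ∧ L t ≤ L u + ε := by
  set F := hL.stieltjes L0 with hF
  rw [hL.lsMeasure_eq L0] at hflat
  set T : Set ℝ := S ∩ Set.Icc s t with hT
  have hsT : s ∈ T := ⟨hsS, le_rfl, hst⟩
  have hbdd : BddAbove T := ⟨t, fun u hu => hu.2.2⟩
  set r := sSup T with hr
  have hsr : s ≤ r := le_csSup hbdd hsT
  have hrt : r ≤ t := csSup_le ⟨s, hsT⟩ fun u hu => hu.2.2
  have hpos : ∀ u, r < u → u ≤ t → 0 < W u := fun u hu hut =>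
    hS u (hsr.trans hu.le) hut fun h => absurd
      (le_csSup hbdd (show u ∈ T from ⟨h, hsr.trans hu.le, hut⟩)) (not_le.mpr hu)
  by_cases hrS : r ∈ S
  · refine ⟨r, hrS, hsr, hrt, ?_⟩
    have h0 : F.measure (Set.Ioc r t) = 0 := measure_mono_null
      (fun u hu => show 0 ≤ u ∧ 0 < W u from
        ⟨hs.trans (hsr.trans hu.1.le), hpos u hu.1 hu.2⟩) hflat
    rw [StieltjesFunction.measure_Ioc, ENNReal.ofReal_eq_zero,
      hL.stieltjes_apply L0 (hs.trans hst), hL.stieltjes_apply L0 (hs.trans hsr)] at h0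
    linarith
  · have hsr' : s < r := lt_of_le_of_ne hsr fun h => hrS (h ▸ hsS)
    have h0 : F.measure (Set.Icc r t) = 0 := by
      refine measure_mono_null (fun u hu => ?_) hflat
      refine show 0 ≤ u ∧ 0 < W u from ⟨hs.trans (hsr.trans hu.1), ?_⟩
      rcases hu.1.eq_or_lt with h | h
      · exact h ▸ hS r hsr hrt hrS
      · exact hpos u h hu.2
    rw [StieltjesFunction.measure_Icc, ENNReal.ofReal_eq_zero,
      hL.stieltjes_apply L0 (hs.trans hst)] at h0
    have hev : ∀ᶠ u in 𝓝[<] r, Function.leftLim F r - ε < F u :=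
      (F.mono.tendsto_leftLim r).eventually (lt_mem_nhds (by linarith))
    obtain ⟨v, hv, hvr⟩ := (mem_nhdsLT_iff_exists_Ioo_subset' hsr').mp hev
    obtain ⟨u, huT, huv⟩ := exists_lt_of_lt_csSup ⟨s, hsT⟩ (show v < sSup T from hv)
    have hur : u < r := lt_of_le_of_ne (le_csSup hbdd huT) fun h => hrS (h ▸ huT.1)
    have h1 : Function.leftLim F r - ε < F u := hvr ⟨huv, hur⟩
    rw [hL.stieltjes_apply L0 (hs.trans huT.2.1)] at h1
    exact ⟨u, huT.1, huT.2.1, huT.2.2, by linarith⟩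

/-- Comparison of two one-dimensional reflected paths. If the free part `σ` of `Wa - W0`
decreases at most as fast as `τ` increases, then on every interval the increment of the negative
part of `Wa - W0` is at most that of `τ`, also after adding the excess of the growth of `La` over
that of `L0`. -/
lemma scalar_comparison {Wa W0 La L0 σ τ : ℝ → ℝ} {α : ℝ}
    (hLa : RCMono La) (La0 : 0 ≤ La 0) (hL0 : RCMono L0) (L00 : 0 ≤ L0 0)
    (hWa : ∀ t, 0 ≤ t → 0 ≤ Wa t) (hW0 : ∀ t, 0 ≤ t → 0 ≤ W0 t)
    (hflata : lsMeasure (extZero La) {t : ℝ | 0 ≤ t ∧ 0 < Wa t} = 0)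
    (hflat0 : lsMeasure (extZero L0) {t : ℝ | 0 ≤ t ∧ 0 < W0 t} = 0)
    (heq : ∀ t, 0 ≤ t → Wa t - W0 t = α - (L0 t - La t) + σ t)
    (hτ : MonotoneOn τ (Set.Ici 0))
    (hστ : ∀ s t, 0 ≤ s → s ≤ t → -(τ t - τ s) ≤ σ t - σ s)
    {s t : ℝ} (hs : 0 ≤ s) (hst : s ≤ t) :
    max (-(Wa t - W0 t)) 0 - max (-(Wa s - W0 s)) 0 ≤ τ t - τ s ∧
    (La t - La s) - (L0 t - L0 s) + (max (-(Wa t - W0 t)) 0 - max (-(Wa s - W0 s)) 0)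
      ≤ τ t - τ s := by
  have ht := hs.trans hst
  have hτst := hτ hs ht hst
  have ms1 := le_max_left (-(Wa s - W0 s)) 0
  have ms2 := le_max_right (-(Wa s - W0 s)) 0
  constructor
  · rcases le_or_gt 0 (Wa t - W0 t) with hZ | hZ
    · rw [max_eq_right (by linarith)]
      linarith
    · rw [max_eq_left (by linarith)]
      refine le_of_forall_pos_le_add fun ε hε => ?_
      obtain ⟨u, hu, hsu, hut, hLu⟩ := flat_last_exit hL0 L00 hflat0 hs hst
        {u | u = s ∨ W0 u ≤ Wa u} (Or.inl rfl)
        (fun u hsu _ h => by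
          have := hWa u (hs.trans hsu)
          have h' : ¬ W0 u ≤ Wa u := fun h' => h (Or.inr h')
          linarith) hε
      have e1 := heq u (hs.trans hsu)
      have e2 := heq t ht
      have e3 := hστ u t (hs.trans hsu) hut
      have e4 := hτ hs (hs.trans hsu) hsu
      have e5 := hLa.mono (hs.trans hsu) ht hut
      rcases hu with rfl | hu <;> linarith
  · rcases le_or_gt (Wa t - W0 t) 0 with hZ | hZ
    · rw [max_eq_left (by linarith)]
      linarith [heq s hs, heq t ht, hστ s t hs hst]
    · rw [max_eq_right (a := -(Wa t - W0 t)) (by linarith)]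
      refine le_of_forall_pos_le_add fun ε hε => ?_
      obtain ⟨u, hu, hsu, hut, hLu⟩ := flat_last_exit hLa La0 hflata hs hst
        {u | u = s ∨ Wa u ≤ W0 u} (Or.inl rfl)
        (fun u hsu _ h => by
          have := hW0 u (hs.trans hsu)
          have h' : ¬ Wa u ≤ W0 u := fun h' => h (Or.inr h')
          linarith) hε
      have e1 := heq u (hs.trans hsu)
      have e2 := heq s hs
      have e3 := hστ s u hs hsu
      have e4 := hτ (hs.trans hsu) ht hut
      have e5 := hL0.mono (hs.trans hsu) ht hut
      rcases hu with rfl | hu <;> linarith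

/-! ### Iterating nonnegative matrices -/

lemma mulVec_le_mulVec {n : ℕ} {M : Matrix (Fin n) (Fin n) ℝ} (hM : ∀ i j, 0 ≤ M i j)
    {v w : Fin n → ℝ} (h : ∀ i, v i ≤ w i) (i : Fin n) : (M.mulVec v) i ≤ (M.mulVec w) i := by
  simp only [Matrix.mulVec, dotProduct]
  exact Finset.sum_le_sum fun j _ => mul_le_mul_of_nonneg_left (h j) (hM i j)

lemma mulVec_pow_tendsto {n : ℕ} {M : Matrix (Fin n) (Fin n) ℝ}
    (hM : Tendsto (fun k : ℕ => M ^ k) atTop (𝓝 0)) (v : Fin n → ℝ) (i : Fin n) :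
    Tendsto (fun k : ℕ => ((M ^ k).mulVec v) i) atTop (𝓝 0) := by
  have h : Tendsto (fun k : ℕ => ∑ j, (M ^ k) i j * v j) atTop (𝓝 (∑ j : Fin n, 0 * v j)) :=
    tendsto_finsetSum _ fun j _ =>
      Tendsto.mul_const _ (tendsto_pi_nhds.mp (tendsto_pi_nhds.mp hM i) j)
  simpa [Matrix.mulVec, dotProduct] using h

lemma transpose_pow_tendsto {n : ℕ} {M : Matrix (Fin n) (Fin n) ℝ}
    (hM : Tendsto (fun k : ℕ => M ^ k) atTop (𝓝 0)) :
    Tendsto (fun k : ℕ => M.transpose ^ k) atTop (𝓝 0) := by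
  have h := ((continuous_id (X := Matrix (Fin n) (Fin n) ℝ)).matrix_transpose.tendsto 0).comp hM
  simpa [Function.comp_def, Matrix.transpose_pow] using h

/-- The solutions `d ≥ 0` of `d ≤ a + M d` are bounded by a constant depending only on `a` and
`M`, when `M ≥ 0` and `Mᵏ → 0`: once the column sums of `Mᵐ` are at most `1/2`, the `m`-fold
iterate of the inequality can be solved for the sum of the coordinates of `d`. -/
lemma bounded_of_le_add_mulVec {n : ℕ} {M : Matrix (Fin n) (Fin n) ℝ} (hM : ∀ i j, 0 ≤ M i j)
    (hlim : Tendsto (fun k : ℕ => M ^ k) atTop (𝓝 0)) (a : Fin n → ℝ) :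
    ∃ C : ℝ, ∀ d : Fin n → ℝ, (∀ i, 0 ≤ d i) → (∀ i, d i ≤ a i + (M.mulVec d) i) →
      ∀ i, d i ≤ C := by
  have hiter : ∀ k : ℕ, ∃ c : Fin n → ℝ, ∀ d : Fin n → ℝ,
      (∀ i, d i ≤ a i + (M.mulVec d) i) → ∀ i, d i ≤ c i + ((M ^ k).mulVec d) i := by
    intro k
    induction k with
    | zero => exact ⟨0, fun d _ i => by simp⟩
    | succ k ih =>
      obtain ⟨c, hc⟩ := ih
      refine ⟨a + M.mulVec c, fun d hd i => ?_⟩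
      have h1 := mulVec_le_mulVec hM (w := c + (M ^ k).mulVec d) (fun i => hc d hd i) i
      rw [Matrix.mulVec_add, Matrix.mulVec_mulVec, ← pow_succ'] at h1
      simp only [Pi.add_apply] at h1 ⊢
      linarith [hd i]
  have hcol : ∀ᶠ k : ℕ in atTop, ∀ j, ∑ i, (M ^ k) i j ≤ 1 / 2 := by
    rw [eventually_all]
    intro j
    have h : Tendsto (fun k : ℕ => ∑ i, (M ^ k) i j) atTop (𝓝 (∑ _i : Fin n, 0)) :=
      tendsto_finsetSum _ fun i _ => tendsto_pi_nhds.mp (tendsto_pi_nhds.mp hlim i) j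
    rw [Finset.sum_const_zero] at h
    exact h.eventually (ge_mem_nhds (by norm_num))
  obtain ⟨k, hk⟩ := hcol.exists
  obtain ⟨c, hc⟩ := hiter k
  refine ⟨2 * ∑ i, c i, fun d hd0 hd i => ?_⟩
  have h1 : ∑ i, d i ≤ ∑ i, c i + ∑ i, ((M ^ k).mulVec d) i := by
    rw [← Finset.sum_add_distrib]
    exact Finset.sum_le_sum fun i _ => hc d hd i
  have h2 : ∑ i, ((M ^ k).mulVec d) i ≤ 1 / 2 * ∑ j, d j := by
    simp only [Matrix.mulVec, dotProduct]
    rw [Finset.sum_comm, Finset.mul_sum]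
    refine Finset.sum_le_sum fun j _ => ?_
    rw [← Finset.sum_mul]
    exact mul_le_mul_of_nonneg_right (hk j) (hd0 j)
  have h3 : d i ≤ ∑ j, d j := Finset.single_le_sum (fun j _ => hd0 j) (Finset.mem_univ i)
  linarith

lemma tendsto_of_monotoneOn_bdd {f : ℝ → ℝ} (hf : MonotoneOn f (Set.Ici 0)) {C : ℝ}
    (hC : ∀ t, 0 ≤ t → f t ≤ C) : ∃ l, Tendsto f atTop (𝓝 l) := by
  have hm : Monotone fun t => f (max t 0) := fun s t hst =>
    hf (le_max_right s 0) (le_max_right t 0) (max_le_max_right 0 hst)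
  refine ⟨_, (tendsto_atTop_ciSup hm ⟨C, ?_⟩).congr' ?_⟩
  · rintro _ ⟨t, rfl⟩
    exact hC _ (le_max_right t 0)
  · filter_upwards [eventually_ge_atTop 0] with t ht
    rw [max_eq_left ht]

/-! ### Comparison in the orthant -/

/-- The data left once the drift and the input have been subtracted away: two pairs `(Wa, La)`
and `(W0, L0)` driven by the same time-dependent routing matrix `p`, with
`Wa - W0 = a - ∫ (I - pᵗ) d(L0 - La)`; here `M` is the transpose of a uniform upper bound of
`p`. The integrals are over `(0,t]`, so the initial values of the regulators are added back to
`a` in `eqn`. -/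
structure Coupling (n : ℕ) (p : Fin n → Fin n → ℝ → ℝ) (M : Matrix (Fin n) (Fin n) ℝ)
    (a : Fin n → ℝ) (Wa La W0 L0 : Fin n → ℝ → ℝ) : Prop where
  p_cont : ∀ j i, ContinuousOn (p j i) (Set.Ici 0)
  p_nonneg : ∀ j i u, 0 ≤ u → 0 ≤ p j i u
  p_le : ∀ j i u, 0 ≤ u → p j i u ≤ M i j
  M_lim : Tendsto (fun k : ℕ => M ^ k) atTop (𝓝 0)
  a_nonneg : ∀ i, 0 ≤ a i
  La_mono : ∀ i, RCMono (La i)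
  La_zero : ∀ i, 0 ≤ La i 0
  L0_mono : ∀ i, RCMono (L0 i)
  L0_zero : ∀ i, 0 ≤ L0 i 0
  Wa_nonneg : ∀ i t, 0 ≤ t → 0 ≤ Wa i t
  W0_nonneg : ∀ i t, 0 ≤ t → 0 ≤ W0 i t
  flata : ∀ i, lsMeasure (extZero (La i)) {t : ℝ | 0 ≤ t ∧ 0 < Wa i t} = 0
  flat0 : ∀ i, lsMeasure (extZero (L0 i)) {t : ℝ | 0 ≤ t ∧ 0 < W0 i t} = 0
  eqn : ∀ i t, 0 ≤ t → Wa i t - W0 i t =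
    (a i + (L0 i 0 - La i 0)) - (L0 i t - La i t) +
      ∑ j, ((∫ u in Set.Ioc 0 t, p j i u ∂(lsMeasure (extZero (L0 j)))) -
        ∫ u in Set.Ioc 0 t, p j i u ∂(lsMeasure (extZero (La j))))

namespace Coupling

variable {n : ℕ} {p : Fin n → Fin n → ℝ → ℝ} {M : Matrix (Fin n) (Fin n) ℝ} {a : Fin n → ℝ}
  {Wa La W0 L0 : Fin n → ℝ → ℝ}

lemma M_nonneg (h : Coupling n p M a Wa La W0 L0) (i j : Fin n) : 0 ≤ M i j :=
  (h.p_nonneg j i 0 le_rfl).trans (h.p_le j i 0 le_rfl)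

/-- The net inflow `∑ⱼ ∫ pⱼᵢ d(L0ⱼ - Laⱼ)` into coordinate `i`. -/
noncomputable def inflow (p : Fin n → Fin n → ℝ → ℝ) (La L0 : Fin n → ℝ → ℝ) (i : Fin n)
    (t : ℝ) : ℝ :=
  ∑ j, ((∫ u in Set.Ioc 0 t, p j i u ∂(lsMeasure (extZero (L0 j)))) -
    ∫ u in Set.Ioc 0 t, p j i u ∂(lsMeasure (extZero (La j))))

lemma inflow_sub (h : Coupling n p M a Wa La W0 L0) (i : Fin n) {s t : ℝ} (hs : 0 ≤ s)
    (hst : s ≤ t) : inflow p La L0 i t - inflow p La L0 i s =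
      ∑ j, ((∫ u in Set.Ioc s t, p j i u ∂(lsMeasure (extZero (L0 j)))) -
        ∫ u in Set.Ioc s t, p j i u ∂(lsMeasure (extZero (La j)))) := by
  unfold inflow
  rw [← Finset.sum_sub_distrib]
  refine Finset.sum_congr rfl fun j _ => ?_
  rw [integral_Ioc_split _ (h.p_cont j i) hs hst, integral_Ioc_split _ (h.p_cont j i) hs hst]
  ring

lemma rc_diff (h : Coupling n p M a Wa La W0 L0) (i : Fin n) (t : ℝ) (ht : 0 ≤ t) :
    ContinuousWithinAt (fun t => Wa i t - W0 i t) (Set.Ici t) t := by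
  have hI : ∀ L : Fin n → ℝ → ℝ, (∀ j, RCMono (L j)) → (∀ j, 0 ≤ L j 0) → ∀ j,
      ContinuousWithinAt (fun t => ∫ u in Set.Ioc 0 t, p j i u ∂(lsMeasure (extZero (L j))))
        (Set.Ici t) t := fun L hL hL0 j =>
    ((hL j).integral (hL0 j) (h.p_cont j i) (h.p_nonneg j i) (h.p_le j i)).rc t ht
  have hsum : ContinuousWithinAt (fun t =>
      ∑ j, ((∫ u in Set.Ioc 0 t, p j i u ∂(lsMeasure (extZero (L0 j)))) -
        ∫ u in Set.Ioc 0 t, p j i u ∂(lsMeasure (extZero (La j))))) (Set.Ici t) t :=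
    tendsto_finsetSum _ fun j _ =>
      (hI L0 h.L0_mono h.L0_zero j).sub (hI La h.La_mono h.La_zero j)
  have hW : ContinuousWithinAt (fun t => (a i + (L0 i 0 - La i 0)) - (L0 i t - La i t) +
      ∑ j, ((∫ u in Set.Ioc 0 t, p j i u ∂(lsMeasure (extZero (L0 j)))) -
        ∫ u in Set.Ioc 0 t, p j i u ∂(lsMeasure (extZero (La j))))) (Set.Ici t) t :=
    (continuousWithinAt_const.sub
      (((h.L0_mono i).rc t ht).sub ((h.La_mono i).rc t ht))).add hsum
  refine hW.congr (fun y hy => ?_) ?_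
  · exact h.eqn i y (ht.trans hy)
  · exact h.eqn i t ht

lemma diff_zero (h : Coupling n p M a Wa La W0 L0) (i : Fin n) : Wa i 0 - W0 i 0 = a i := by
  have := h.eqn i 0 le_rfl
  simp only [Set.Ioc_self, Measure.restrict_empty, integral_zero_measure, sub_self,
    Finset.sum_const_zero] at this
  linarith

/-- `ρ` dominates the negative part of the signed measure `d(L0 - La)`. -/
def Dominates (La L0 ρ : Fin n → ℝ → ℝ) : Prop :=
  (∀ i, RCMono (ρ i)) ∧ ∀ i, MonotoneOn (fun t => L0 i t + ρ i t - La i t) (Set.Ici 0)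

/-- One improvement step: from a dominating `ρ`, the function `M ρ` minus the negative part of
`Wa - W0` is again nondecreasing and again dominating. -/
lemma step (h : Coupling n p M a Wa La W0 L0) {ρ : Fin n → ℝ → ℝ} (hρ : Dominates La L0 ρ) :
    Dominates La L0 fun i t => ∑ j, M i j * ρ j t + -max (-(Wa i t - W0 i t)) 0 := by
  have hτ : ∀ i, RCMono (fun t => ∑ j, M i j * ρ j t) := fun i =>
    RCMono.sum fun j => (hρ.1 j).const_mul (h.M_nonneg i j)
  have hστ : ∀ i s t, 0 ≤ s → s ≤ t → -((∑ j, M i j * ρ j t) - ∑ j, M i j * ρ j s) ≤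
      inflow p La L0 i t - inflow p La L0 i s := by
    intro i s t hs hst
    rw [h.inflow_sub i hs hst, ← Finset.sum_sub_distrib, ← Finset.sum_neg_distrib]
    refine Finset.sum_le_sum fun j _ => ?_
    have := integral_comparison (h.La_mono j) (h.La_zero j) (h.L0_mono j) (h.L0_zero j)
      (hρ.1 j) (hρ.2 j) (h.p_cont j i) (h.p_nonneg j i) (h.p_le j i) hs hst
    linarith
  have key := fun i {s t : ℝ} (hs : 0 ≤ s) (hst : s ≤ t) =>
    scalar_comparison (h.La_mono i) (h.La_zero i) (h.L0_mono i) (h.L0_zero i) (h.Wa_nonneg i)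
      (h.W0_nonneg i) (h.flata i) (h.flat0 i) (h.eqn i) (hτ i).mono (hστ i) hs hst
  refine ⟨fun i => ⟨fun s hs t ht hst => ?_, fun t ht => ?_⟩, fun i s hs t ht hst => ?_⟩
  · have := (key i hs hst).1
    simp only
    linarith
  · have hm : ContinuousWithinAt (fun t => max (-(Wa i t - W0 i t)) 0) (Set.Ici t) t :=
      Tendsto.max (h.rc_diff i t ht).neg tendsto_const_nhds
    exact ((hτ i).rc t ht).add hm.neg
  · have := (key i hs hst).2
    simp only
    linarith

/-- The growth on `[0,t]` of the function produced by `step`: its subtracted term vanishes at `0`,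
because `Wa 0 - W0 0 = a ≥ 0`. -/
lemma step_growth (h : Coupling n p M a Wa La W0 L0) (ρ : Fin n → ℝ → ℝ) (i : Fin n) (t : ℝ) :
    (∑ j, M i j * ρ j t + -max (-(Wa i t - W0 i t)) 0) -
      (∑ j, M i j * ρ j 0 + -max (-(Wa i 0 - W0 i 0)) 0) =
    (M.mulVec fun j => ρ j t - ρ j 0) i - max (-(Wa i t - W0 i t)) 0 := by
  have h1 : max (-(Wa i 0 - W0 i 0)) 0 = 0 := by
    rw [h.diff_zero i]
    exact max_eq_right (neg_nonpos.mpr (h.a_nonneg i))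
  rw [h1]
  simp only [Matrix.mulVec, dotProduct, mul_sub, Finset.sum_sub_distrib]
  ring

/-- Iterating `step` from `ρ = La` gives dominating functions whose growth is at most
`Mᵏ (La t - La 0)`. -/
lemma exists_dominates (h : Coupling n p M a Wa La W0 L0) (k : ℕ) :
    ∃ ρ : Fin n → ℝ → ℝ, Dominates La L0 ρ ∧ ∀ t, 0 ≤ t → ∀ i,
      ρ i t - ρ i 0 ≤ ((M ^ k).mulVec fun j => La j t - La j 0) i := by
  induction k with
  | zero =>
    refine ⟨La, ⟨h.La_mono, fun i => ?_⟩, fun t _ i => by simp⟩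
    simpa using (h.L0_mono i).mono
  | succ k ih =>
    obtain ⟨ρ, hρ, hle⟩ := ih
    refine ⟨_, h.step hρ, fun t ht i => ?_⟩
    have h1 := mulVec_le_mulVec h.M_nonneg (v := fun j => ρ j t - ρ j 0) (hle t ht) i
    rw [Matrix.mulVec_mulVec, ← pow_succ'] at h1
    have h2 := h.step_growth ρ i t
    have h3 := le_max_right (-(Wa i t - W0 i t)) 0
    linarith

/-- The regulator started from the smaller initial point grows faster. -/
lemma monotone_regulator (h : Coupling n p M a Wa La W0 L0) (i : Fin n) :
    MonotoneOn (fun t => L0 i t - La i t) (Set.Ici 0) := by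
  intro s hs t ht hst
  have hlim := (mulVec_pow_tendsto h.M_lim (fun j => La j t - La j 0) i).add_const
    (L0 i t - La i t)
  rw [zero_add] at hlim
  refine ge_of_tendsto' hlim fun k => ?_
  obtain ⟨ρ, hρ, hle⟩ := h.exists_dominates k
  have h1 := hρ.2 i hs ht hst
  have h2 := (hρ.1 i).mono Set.self_mem_Ici hs hs
  have h3 := hle t ht i
  simp only at h1 ⊢
  linarith

lemma diff_nonneg (h : Coupling n p M a Wa La W0 L0) (i : Fin n) {t : ℝ} (ht : 0 ≤ t) :
    0 ≤ Wa i t - W0 i t := by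
  have hlim := mulVec_pow_tendsto h.M_lim (fun j => La j t - La j 0) i
  have hlim' := (tendsto_add_atTop_iff_nat 1).mpr hlim
  suffices -(Wa i t - W0 i t) ≤ 0 by linarith
  refine ge_of_tendsto' hlim' fun k => ?_
  obtain ⟨ρ, hρ, hle⟩ := h.exists_dominates k
  have h0 := ((h.step hρ).1 i).mono Set.self_mem_Ici ht ht
  have h1 := mulVec_le_mulVec h.M_nonneg (v := fun j => ρ j t - ρ j 0) (hle t ht) i
  rw [Matrix.mulVec_mulVec, ← pow_succ'] at h1
  have h2 := h.step_growth ρ i t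
  have h3 := le_max_left (-(Wa i t - W0 i t)) 0
  simp only at h0
  linarith

/-- Since `L0 - La` is nondecreasing, the net inflow is nondecreasing too. -/
lemma inflow_mono (h : Coupling n p M a Wa La W0 L0) (i : Fin n) :
    MonotoneOn (inflow p La L0 i) (Set.Ici 0) := by
  intro s hs t ht hst
  rw [← sub_nonneg, h.inflow_sub i hs hst]
  refine Finset.sum_nonneg fun j _ => ?_
  have hz : RCMono fun _ => (0 : ℝ) :=
    ⟨fun _ _ _ _ _ => le_rfl, fun _ _ => continuousWithinAt_const⟩
  have := integral_comparison (h.La_mono j) (h.La_zero j) (h.L0_mono j) (h.L0_zero j) hz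
    (by simpa using h.monotone_regulator j) (h.p_cont j i) (h.p_nonneg j i) (h.p_le j i) hs hst
  linarith

lemma inflow_le (h : Coupling n p M a Wa La W0 L0) (i : Fin n) {t : ℝ} (ht : 0 ≤ t) :
    inflow p La L0 i t ≤
      (M.mulVec fun j => (L0 j t - La j t) - (L0 j 0 - La j 0)) i := by
  refine Finset.sum_le_sum fun j _ => ?_
  have hD : RCMono fun t => L0 j t - La j t :=
    ⟨h.monotone_regulator j, fun t ht => ((h.L0_mono j).rc t ht).sub ((h.La_mono j).rc t ht)⟩
  have hG : MonotoneOn (fun t => La j t + (L0 j t - La j t) - L0 j t) (Set.Ici 0) :=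
    fun s _ t _ _ => by simp
  have := integral_comparison (h.L0_mono j) (h.L0_zero j) (h.La_mono j) (h.La_zero j) hD hG
    (h.p_cont j i) (h.p_nonneg j i) (h.p_le j i) le_rfl ht
  simp only
  linarith

lemma exists_limit (h : Coupling n p M a Wa La W0 L0) (i : Fin n) :
    ∃ l, 0 ≤ l ∧ Tendsto (fun t => Wa i t - W0 i t) atTop (𝓝 l) := by
  obtain ⟨C, hC⟩ := bounded_of_le_add_mulVec h.M_nonneg h.M_lim a
  -- `Wa - W0 ≥ 0` turns the equation into `d ≤ a + M d` for the growth `d` of `L0 - La`.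
  have hd : ∀ t, 0 ≤ t → ∀ j, (L0 j t - La j t) - (L0 j 0 - La j 0) ≤ C := fun t ht =>
    hC _ (fun j => sub_nonneg.mpr (h.monotone_regulator j Set.self_mem_Ici ht ht)) fun j => by
      have h1 := h.inflow_le j ht
      have h2 := h.diff_nonneg j ht
      rw [h.eqn j t ht] at h2
      unfold inflow at h1
      linarith
  obtain ⟨l₁, hl₁⟩ := tendsto_of_monotoneOn_bdd (h.monotone_regulator i)
    (C := C + (L0 i 0 - La i 0)) fun t ht => by linarith [hd t ht i]
  obtain ⟨l₂, hl₂⟩ := tendsto_of_monotoneOn_bdd (h.inflow_mono i)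
    (C := (M.mulVec fun _ => C) i) fun t ht =>
      (h.inflow_le i ht).trans (mulVec_le_mulVec h.M_nonneg (hd t ht) i)
  have hlim : Tendsto (fun t => Wa i t - W0 i t) atTop
      (𝓝 ((a i + (L0 i 0 - La i 0)) - l₁ + l₂)) := by
    refine ((hl₁.const_sub (a i + (L0 i 0 - La i 0))).add hl₂).congr' ?_
    filter_upwards [eventually_ge_atTop 0] with t ht
    exact (h.eqn i t ht).symm
  refine ⟨_, ge_of_tendsto hlim ?_, hlim⟩
  filter_upwards [eventually_ge_atTop 0] with t ht using h.diff_nonneg i ht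

end Coupling

/-! ### From solution pairs to couplings -/

/-- For coefficients depending on time only, the reflection term of the Skorohod equation is
`L t - L 0` minus the inflow; the atom of `dL` at `0` does not contribute. -/
lemma reflection_term {n : ℕ} {P : ℝ → (Fin n → ℝ) → (Fin n → ℝ) → Matrix (Fin n) (Fin n) ℝ}
    (hP_time : ∀ s (ℓ ℓ' w w' : Fin n → ℝ), P s ℓ w = P s ℓ' w')
    (hP : ∀ j i, ContinuousOn (fun u => P u 0 0 j i) (Set.Ici 0))
    {W L : ℝ → Fin n → ℝ} (hL : ∀ i, RCMono fun t => L t i) (hL0 : ∀ i, 0 ≤ L 0 i)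
    {t : ℝ} (ht : 0 ≤ t) (i : Fin n) :
    ∑ j : Fin n, ∫ u in Set.Ioc (0 : ℝ) t,
        RofP P u (Function.leftLim L u) (Function.leftLim W u) i j
          ∂(lsMeasure (extZero fun s => L s j)) =
      L t i - L 0 i - ∑ j : Fin n, ∫ u in Set.Ioc (0 : ℝ) t, P u 0 0 j i
          ∂(lsMeasure (extZero fun s => L s j)) := by
  have h1 : ∀ j, ∫ u in Set.Ioc (0 : ℝ) t,
        RofP P u (Function.leftLim L u) (Function.leftLim W u) i j
          ∂(lsMeasure (extZero fun s => L s j)) =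
      (1 : Matrix (Fin n) (Fin n) ℝ) i j * (L t j - L 0 j) -
        ∫ u in Set.Ioc (0 : ℝ) t, P u 0 0 j i ∂(lsMeasure (extZero fun s => L s j)) := by
    intro j
    have hR : ∀ u, RofP P u (Function.leftLim L u) (Function.leftLim W u) i j =
        (1 : Matrix (Fin n) (Fin n) ℝ) i j - P u 0 0 j i := fun u => by
      rw [RofP, hP_time u _ 0 _ 0, Matrix.sub_apply, Matrix.transpose_apply]
    simp only [hR]
    rw [integral_sub (integrableOn_Ioc_lsMeasure _ continuousOn_const le_rfl)
      (integrableOn_Ioc_lsMeasure _ (hP j i) le_rfl), setIntegral_const,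
      (hL j).measureReal_Ioc (hL0 j) le_rfl ht, smul_eq_mul, mul_comm]
  simp only [h1]
  rw [Finset.sum_sub_distrib]
  simp [Matrix.one_apply]

/-- Proposition 3.2: if the coefficients depend only on time, the limit of Wᵃ(t) - W⁰(t)
exists and is coordinatewise nonnegative. -/
theorem time_dependent_coefficients_difference_limit
    {n : ℕ} (hn : 0 < n)
    (b : ℝ → (Fin n → ℝ) → (Fin n → ℝ) → Fin n → ℝ)
    (P : ℝ → (Fin n → ℝ) → (Fin n → ℝ) → Matrix (Fin n) (Fin n) ℝ)
    (hA : HypA b P)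
    (hb_time : ∀ s (ℓ ℓ' w w' : Fin n → ℝ), b s ℓ w = b s ℓ' w')
    (hP_time : ∀ s (ℓ ℓ' w w' : Fin n → ℝ), P s ℓ w = P s ℓ' w')
    (X Wa La W0 L0 : ℝ → Fin n → ℝ) (hX : Cadlag X) (a : Fin n → ℝ) (ha : 0 ≤ a)
    (hsola : IsSolutionPairBR b (RofP P) (fun t => a + X t) Wa La)
    (hsol0 : IsSolutionPairBR b (RofP P) X W0 L0) :
    ∃ ζ : Fin n → ℝ, 0 ≤ ζ ∧
      Filter.Tendsto (fun t => Wa t - W0 t) Filter.atTop (nhds ζ) := by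
  obtain ⟨Pib, hPib, hlim⟩ := hA.unif_spectral
  have hdom : ∀ u : ℝ, 0 ≤ u → (u, (0 : Fin n → ℝ), (0 : Fin n → ℝ)) ∈ NonnegDom n :=
    fun u hu => ⟨hu, le_rfl, le_rfl⟩
  have hPc : ∀ j i, ContinuousOn (fun u => P u 0 0 j i) (Set.Ici 0) := fun j i => by
    have h1 : ContinuousOn (fun u : ℝ => P u 0 0) (Set.Ici 0) :=
      hA.P_cont.comp (f := fun u : ℝ => (u, (0 : Fin n → ℝ), (0 : Fin n → ℝ)))
        (by fun_prop) (fun u hu => hdom u hu)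
    exact continuousOn_pi.mp (continuousOn_pi.mp h1 j) i
  have hLa : ∀ i, RCMono fun t => La t i := fun i => ⟨hsola.monoL i, hsola.rcL i⟩
  have hL0 : ∀ i, RCMono fun t => L0 t i := fun i => ⟨hsol0.monoL i, hsol0.rcL i⟩
  have hLa0 : ∀ i, 0 ≤ La 0 i := fun i => hsola.nonnegL i 0 le_rfl
  have hL00 : ∀ i, 0 ≤ L0 0 i := fun i => hsol0.nonnegL i 0 le_rfl
  have hC : Coupling n (fun j i u => P u 0 0 j i) Pib.transpose a
      (fun i t => Wa t i) (fun i t => La t i) (fun i t => W0 t i) (fun i t => L0 t i) :=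
    { p_cont := hPc
      p_nonneg := fun j i u hu => hA.P_nonneg u 0 0 (hdom u hu) j i
      p_le := fun j i u hu => hPib u 0 0 (hdom u hu) j i
      M_lim := transpose_pow_tendsto hlim
      a_nonneg := ha
      La_mono := hLa
      La_zero := hLa0
      L0_mono := hL0
      L0_zero := hL00
      Wa_nonneg := hsola.nonnegW
      W0_nonneg := hsol0.nonnegW
      flata := hsola.flat
      flat0 := hsol0.flat
      eqn := fun i t ht => by
        have ea := hsola.eqn t ht i
        have e0 := hsol0.eqn t ht i
        rw [reflection_term hP_time hPc hLa hLa0 ht i] at ea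
        rw [reflection_term hP_time hPc hL0 hL00 ht i] at e0
        -- The drift terms agree, as `b` depends on time only.
        have hb : ∀ L W : ℝ → Fin n → ℝ,
            ∫ u in Set.Ioc (0 : ℝ) t, b u (Function.leftLim L u) (Function.leftLim W u) i =
              ∫ u in Set.Ioc (0 : ℝ) t, b u 0 0 i := fun L W => by
          congr 1
          funext u
          rw [hb_time u _ 0 _ 0]
        rw [hb] at ea e0
        rw [Finset.sum_sub_distrib]
        simp only [Pi.add_apply] at ea
        linarith }
  choose ζ hζ0 hζ using hC.exists_limit
  exact ⟨ζ, hζ0, tendsto_pi_nhds.mpr hζ⟩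
end

section
/- Suppose that b and R are functions of the time variable s only (and satisfy (A1)–(A3)). Let X : [0,∞) → ℝⁿ be càdlàg and suppose that for every i ∈ {1,…,n}, liminf_{t→∞} [ X_i(t) + ∫₀ᵗ b_i(s) ds ] = −∞. Then for every a ∈ [0,∞)ⁿ and all solution pairs (Wᵃ, Lᵃ) and (W⁰, L⁰) of the Skorohod problem, with coefficients (b, R), for a + X and for X respectively, lim_{t→∞} (Wᵃ(t) − W⁰(t)) = 0. -/
/-!
Let `(Wa, La)` and `(W0, L0)` be the two solution pairs and `D = Wa - W0`. Since the coefficients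
depend on time only, the drift terms cancel and `D t = a + ∫_(0,t] R d(La - L0)`.

*Total variation bound.* Write `La - L0` as a density `m` against a common measure `κ`. Where `dLa_i`
charges, `Wa_i = 0`, so `D_i ≤ 0`; where `dL0_i` charges, `D_i ≥ 0`. Hence `m_i` has sign opposite
to `D_i`, and formally `d|D_i| ≤ (-|m_i| + ∑_j p_ji |m_j|) dκ` (`drift_bound`). Because the powers of
`Π` tend to zero, there are weights `v ≥ 0` with `Π v ≤ v - 1/2` (`exists_weight`); summing with these
weights gives `∑ v_i |D_i(T)| + (1/2) ∫_(0,T] ∑_j |m_j| dκ ≤ ∑ v_i |a_i|`. So `La - L0` has finite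
total variation on `(0, ∞)` and `D` converges (`exists_limit`).

*Chain rule.* The differential inequality is `abs_chain`. The path `D_i` may jump, but convexity of
the absolute value makes the jump terms have the right sign as long as the sign of `D_i` is evaluated
after the jump; at zeros of `D_i` the sign may be taken to be either `1` or `-1`, and choosing it
pointwise as the opposite of the sign of the increment yields the term `-|m_i|`.

*The limit is zero.* The hypothesis on the lower limit forces `La_i` and `L0_i` to be unbounded, so
both `Wa_i` and `W0_i` vanish at arbitrarily large times (`frequently_zero`). At zeros of `Wa_i` one
has `D_i ≤ 0`, at zeros of `W0_i` one has `D_i ≥ 0`, hence the limit of `D_i` is `0`.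
-/

open MeasureTheory Filter Topology

/-! ### Chain rule for convex functions of a primitive -/

lemma rc_primitive {κ : Measure ℝ} {h : ℝ → ℝ} (hh : Integrable h κ) (t : ℝ) :
    ContinuousWithinAt (fun t => ∫ u in Set.Iic t, h u ∂κ) (Set.Ici t) t := by
  unfold ContinuousWithinAt
  simp_rw [← integral_indicator measurableSet_Iic]
  refine tendsto_integral_filter_of_dominated_convergence (fun u => ‖h u‖) ?_ ?_ hh.norm ?_
  · exact Eventually.of_forall fun r => (hh.indicator measurableSet_Iic).aestronglyMeasurable
  · exact Eventually.of_forall fun r => ae_of_all _ fun u => norm_indicator_le_norm_self _ _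
  · refine ae_of_all _ fun u => ?_
    rcases le_or_gt u t with hu | hu
    · refine tendsto_const_nhds.congr' ?_
      filter_upwards [self_mem_nhdsWithin] with r hr
      rw [Set.indicator_of_mem (show u ∈ Set.Iic t from hu),
        Set.indicator_of_mem (show u ∈ Set.Iic r from hu.trans hr)]
    · refine tendsto_const_nhds.congr' ?_
      filter_upwards [mem_nhdsWithin_of_mem_nhds (Iio_mem_nhds hu)] with r hr
      rw [Set.indicator_of_notMem (by simpa using hu),
        Set.indicator_of_notMem (by simpa using hr)]

lemma measurable_primitive {κ : Measure ℝ} {h : ℝ → ℝ} (hh : Integrable h κ) :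
    Measurable (fun t => ∫ u in Set.Iic t, h u ∂κ) := by
  have mono : ∀ k : ℝ → ℝ, Integrable k κ → (∀ u, 0 ≤ k u) →
      Measurable (fun t => ∫ u in Set.Iic t, k u ∂κ) := by
    intro k hk hk0
    refine Monotone.measurable fun s t hst => ?_
    exact setIntegral_mono_set hk.integrableOn (ae_of_all _ hk0)
      (Set.Iic_subset_Iic.2 hst).eventuallyLE
  have e : (fun t => ∫ u in Set.Iic t, h u ∂κ) =
      fun t => (∫ u in Set.Iic t, max (h u) 0 ∂κ) - ∫ u in Set.Iic t, max (-h u) 0 ∂κ := by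
    funext t
    rw [← integral_sub hh.pos_part.integrableOn hh.neg_part.integrableOn]
    congr 1
    funext u
    exact (max_zero_sub_eq_self (h u)).symm
  rw [e]
  exact (mono _ hh.pos_part fun _ => le_max_right _ _).sub
    (mono _ hh.neg_part fun _ => le_max_right _ _)

lemma primitive_sub {κ : Measure ℝ} {h : ℝ → ℝ} (hh : Integrable h κ) {s t : ℝ} (hst : s ≤ t) :
    (∫ u in Set.Iic t, h u ∂κ) - ∫ u in Set.Iic s, h u ∂κ = ∫ u in Set.Ioc s t, h u ∂κ := by
  rw [intervalIntegral.integral_Iic_sub_Iic hh.integrableOn hh.integrableOn,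
    intervalIntegral.integral_of_le hst]

/-- Chain rule inequality: if `f` is the primitive of `h dκ` and `g` is a continuous bounded
subgradient of `φ`, then `φ (f t) - φ (f s)` is at most the integral of `g (f u) h u`. The measure `κ`
may have atoms: along a mesh, each increment of `φ ∘ f` is bounded by the subgradient at the *right*
end point, and the resulting sums converge because `f` is right-continuous. -/
lemma convex_chain {κ : Measure ℝ} {h f φ g : ℝ → ℝ} (hh : Integrable h κ)
    (f0 : ℝ) (hf : ∀ t, f t = f0 + ∫ u in Set.Iic t, h u ∂κ)
    (hg : Continuous g) (hgb : ∀ x, |g x| ≤ 1) (hφ : ∀ x y, φ y - φ x ≤ g y * (y - x))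
    {s t : ℝ} (hst : s ≤ t) :
    φ (f t) - φ (f s) ≤ ∫ u in Set.Ioc s t, g (f u) * h u ∂κ := by
  have hfm : Measurable f := by
    rw [funext hf]; exact (measurable_primitive hh).const_add _
  have hfc : ∀ t, ContinuousWithinAt f (Set.Ici t) t := by
    intro t; rw [funext hf]; exact (rc_primitive hh t).const_add _
  -- `nx N u` is the first point of the mesh `s + ℤ / (N + 1)` that is at least `u`, cut off at `t`
  let nx : ℕ → ℝ → ℝ := fun N u => min t (s + ⌈(u - s) * (N + 1)⌉ / (N + 1))
  have hnxm : ∀ N, Measurable (nx N) := fun N => by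
    refine measurable_const.min (measurable_const.add (Measurable.div_const ?_ _))
    exact (measurable_from_top (f := fun z : ℤ => (z : ℝ))).comp
      (Int.measurable_ceil.comp (by fun_prop))
  -- the mesh is the telescoping sum behind this bound; on each cell `nx N` is the right end point
  have hsum : ∀ N : ℕ, φ (f t) - φ (f s) ≤ ∫ u in Set.Ioc s t, g (f (nx N u)) * h u ∂κ := by
    intro N
    have hN : (0 : ℝ) < N + 1 := by positivity
    let p : ℕ → ℝ := fun k => min t (s + k / (N + 1))
    obtain ⟨K, hK⟩ : ∃ K : ℕ, (t - s) * (N + 1) ≤ K := exists_nat_ge _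
    have hp0 : p 0 = s := by simp [p, hst]
    have hpK : p K = t := by
      simp only [p]
      apply min_eq_left
      have := (le_div_iff₀ hN).2 hK
      linarith
    have hpm : Monotone p := by
      intro k l hkl
      have : (k : ℝ) ≤ l := by exact_mod_cast hkl
      exact min_le_min le_rfl (by gcongr)
    have hint : ∀ a b : ℝ, IntervalIntegrable (fun u => g (f (nx N u)) * h u) κ a b := by
      intro a b
      have : Integrable (fun u => g (f (nx N u)) * h u) κ := by
        refine hh.bdd_mul (c := 1)
          (hg.measurable.comp (hfm.comp (hnxm N))).aestronglyMeasurable (ae_of_all _ fun u => ?_)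
        exact hgb _
      exact this.intervalIntegrable
    rw [← intervalIntegral.integral_of_le hst]
    have e1 := intervalIntegral.sum_integral_adjacent_intervals (a := p) (n := K)
      (fun k _ => hint (p k) (p (k + 1)))
    rw [hp0, hpK] at e1
    rw [← e1]
    have e2 := Finset.sum_range_sub (fun k => φ (f (p k))) K
    simp only [hp0, hpK] at e2
    rw [← e2]
    refine Finset.sum_le_sum fun k _ => ?_
    have hk := hpm (Nat.le_succ k)
    have e3 : ∫ u in (p k)..(p (k + 1)), g (f (nx N u)) * h u ∂κ =
        g (f (p (k + 1))) * (f (p (k + 1)) - f (p k)) := by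
      rw [hf (p (k + 1)), hf (p k), add_sub_add_left_eq_sub, primitive_sub hh hk,
        ← integral_const_mul, intervalIntegral.integral_of_le hk]
      refine setIntegral_congr_fun measurableSet_Ioc fun u hu => ?_
      have hnx : nx N u = p (k + 1) := by
        have h1 : s + k / (N + 1) < u := by
          rcases min_lt_iff.1 hu.1 with h | h
          · exact absurd (hu.2.trans (min_le_left _ _)) (not_le.2 h)
          · exact h
        have h2 : u ≤ s + (k + 1 : ℕ) / (N + 1) := hu.2.trans (min_le_right _ _)
        have h3 : ⌈(u - s) * (N + 1)⌉ = ((k + 1 : ℕ) : ℤ) := by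
          rw [Int.ceil_eq_iff]
          constructor
          · have : (k : ℝ) / (N + 1) < u - s := by linarith
            rw [div_lt_iff₀ hN] at this
            push_cast; linarith
          · have : u - s ≤ (k + 1 : ℕ) / (N + 1) := by linarith
            rw [le_div_iff₀ hN] at this
            push_cast at this ⊢; linarith
        simp only [nx, p, h3]; push_cast; rfl
      rw [hnx, hf (p (k + 1))]
    rw [e3]
    exact hφ _ _
  have hlim : Tendsto (fun N : ℕ => ∫ u in Set.Ioc s t, g (f (nx N u)) * h u ∂κ) atTop
      (𝓝 (∫ u in Set.Ioc s t, g (f u) * h u ∂κ)) := by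
    refine tendsto_integral_of_dominated_convergence (fun u => ‖h u‖) ?_ hh.norm.integrableOn ?_ ?_
    · exact fun N => ((hg.measurable.comp (hfm.comp (hnxm N))).aestronglyMeasurable.mul
        hh.aestronglyMeasurable).restrict
    · refine fun N => ae_of_all _ fun u => ?_
      rw [norm_mul]
      exact mul_le_of_le_one_left (norm_nonneg _) (hgb _)
    · refine (ae_restrict_iff' measurableSet_Ioc).2 (ae_of_all _ fun u hu => ?_)
      refine Tendsto.mul_const _ ((hg.tendsto _).comp ((hfc u).tendsto.comp ?_))
      have hge : ∀ N : ℕ, u ≤ nx N u := by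
        intro N
        have hN : (0 : ℝ) < N + 1 := by positivity
        refine le_min hu.2 ?_
        have := (le_div_iff₀ hN).2 (Int.le_ceil ((u - s) * (N + 1)))
        linarith
      have hle : ∀ N : ℕ, nx N u ≤ u + 1 / (N + 1) := by
        intro N
        have hN : (0 : ℝ) < N + 1 := by positivity
        refine (min_le_right _ _).trans ?_
        have := (Int.ceil_lt_add_one ((u - s) * (N + 1))).le
        have := div_le_div_of_nonneg_right this hN.le
        rw [add_div, mul_div_cancel_right₀ _ hN.ne'] at this
        linarith
      refine tendsto_nhdsWithin_iff.2 ⟨?_, Eventually.of_forall hge⟩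
      refine tendsto_of_tendsto_of_tendsto_of_le_of_le tendsto_const_nhds ?_ hge hle
      simpa using tendsto_one_div_add_atTop_nhds_zero_nat.const_add u
  exact ge_of_tendsto' hlim hsum

/-- The tangent line inequality for the convex function `y ↦ √(y ^ 2 + e)`, a smooth approximation
of the absolute value. -/
lemma sqrt_tangent (e x y : ℝ) (he : 0 < e) :
    √(y ^ 2 + e) - √(x ^ 2 + e) ≤ y / √(y ^ 2 + e) * (y - x) := by
  have hy : 0 < √(y ^ 2 + e) := Real.sqrt_pos.2 (by positivity)
  have hx : 0 < √(x ^ 2 + e) := Real.sqrt_pos.2 (by positivity)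
  have sy := Real.sq_sqrt (show 0 ≤ y ^ 2 + e by positivity)
  have sx := Real.sq_sqrt (show 0 ≤ x ^ 2 + e by positivity)
  rw [div_mul_eq_mul_div, le_div_iff₀ hy]
  have key : x * y + e ≤ √(x ^ 2 + e) * √(y ^ 2 + e) := by
    refine le_of_abs_le (abs_le_of_sq_le_sq ?_ (by positivity))
    rw [mul_pow, sx, sy]
    nlinarith [mul_nonneg he.le (sq_nonneg (x - y))]
  nlinarith

/-! ### Chain rule for the absolute value -/

/-- The sign function, with the value `c` at `0`; for `|c| ≤ 1` it is a subgradient of the absolute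
value. -/
noncomputable def sgnAt (c x : ℝ) : ℝ := if x = 0 then c else SignType.sign x

/-- The derivatives of the functions `x ↦ √((x + c d) ^ 2 + d ^ 4)` converge, as `d` decreases to
`0`, to the sign function with value `c` at `0`: the shift by `c d` dominates the width `d ^ 2` of the
smoothing. -/
lemma sgnAt_smooth_tendsto (c x : ℝ) (hc : |c| = 1) :
    Tendsto (fun N : ℕ => (x + c * (1 / (N + 1 : ℝ))) /
      √((x + c * (1 / (N + 1 : ℝ))) ^ 2 + (1 / (N + 1 : ℝ)) ^ 4)) atTop (𝓝 (sgnAt c x)) := by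
  have hc2 : c ^ 2 = 1 := by rw [← sq_abs, hc, one_pow]
  have hd : Tendsto (fun N : ℕ => 1 / (N + 1 : ℝ)) atTop (𝓝 0) :=
    tendsto_one_div_add_atTop_nhds_zero_nat
  by_cases hx : x = 0
  · have key : Tendsto (fun N : ℕ => c / √(1 + (1 / (N + 1 : ℝ)) ^ 2)) atTop (𝓝 c) := by
      have h1 : ContinuousAt (fun d : ℝ => c / √(1 + d ^ 2)) 0 :=
        ContinuousAt.div (by fun_prop) (by fun_prop) (by simp)
      have h2 := h1.tendsto.comp hd
      rw [show c / √(1 + (0 : ℝ) ^ 2) = c by simp] at h2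
      exact h2
    simp only [sgnAt, hx, if_true]
    refine key.congr fun N => ?_
    have hN : (0 : ℝ) < 1 / (N + 1 : ℝ) := by positivity
    generalize 1 / (N + 1 : ℝ) = d at hN
    have : (0 + c * d) ^ 2 + d ^ 4 = d ^ 2 * (1 + d ^ 2) := by
      rw [zero_add, mul_pow, hc2]; ring
    rw [this, Real.sqrt_mul (sq_nonneg d), Real.sqrt_sq hN.le, zero_add, mul_comm c d,
      mul_div_mul_left _ _ hN.ne']
  · have h1 : ContinuousAt (fun d : ℝ => (x + c * d) / √((x + c * d) ^ 2 + d ^ 4)) 0 := by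
      refine ContinuousAt.div (by fun_prop) (by fun_prop) ?_
      simpa [Real.sqrt_sq_eq_abs] using hx
    have h2 := h1.tendsto.comp hd
    have h3 : (x + c * 0) / √((x + c * 0) ^ 2 + 0 ^ 4) = sgnAt c x := by
      simp only [sgnAt, hx, if_false, mul_zero, add_zero, ne_eq, OfNat.ofNat_ne_zero,
        not_false_eq_true, zero_pow, Real.sqrt_sq_eq_abs]
      rcases lt_or_gt_of_ne hx with h | h
      · simp [abs_of_neg h, sign_neg h, div_neg, div_self hx]
      · simp [abs_of_pos h, sign_pos h, div_self hx]
    rw [h3] at h2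
    exact h2

lemma measurable_sgnAt (c : ℝ) : Measurable (sgnAt c) := by
  refine Measurable.ite (measurableSet_singleton 0) measurable_const ?_
  have : (fun x : ℝ => ((SignType.sign x : SignType) : ℝ)) =
      fun x => if 0 < x then 1 else if x < 0 then -1 else 0 := by
    funext x
    rcases lt_trichotomy x 0 with h | h | h
    · simp [h, sign_neg h, not_lt.2 h.le]
    · simp [h]
    · simp [h, sign_pos h]
  rw [this]
  exact Measurable.ite measurableSet_Ioi measurable_const
    (Measurable.ite measurableSet_Iio measurable_const measurable_const)

lemma abs_sgnAt_le (c x : ℝ) (hc : |c| ≤ 1) : |sgnAt c x| ≤ 1 := by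
  unfold sgnAt
  split_ifs with h
  · exact hc
  · rcases lt_or_gt_of_ne h with h | h
    · simp [sign_neg h]
    · simp [sign_pos h]

/-- The chain rule inequality for `|f|`, with the value of the sign at zeros of `f` fixed once and for
all to be `c = 1` or `c = -1`. -/
lemma abs_chain_const {κ : Measure ℝ} {h f : ℝ → ℝ} (hh : Integrable h κ)
    (f0 : ℝ) (hf : ∀ t, f t = f0 + ∫ u in Set.Iic t, h u ∂κ)
    (c : ℝ) (hc : |c| = 1) {s t : ℝ} (hst : s ≤ t) :
    |f t| - |f s| ≤ ∫ u in Set.Ioc s t, sgnAt c (f u) * h u ∂κ := by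
  have hfm : Measurable f := by
    rw [funext hf]; exact (measurable_primitive hh).const_add _
  let d : ℕ → ℝ := fun N => 1 / (N + 1 : ℝ)
  have hd : Tendsto d atTop (𝓝 0) := tendsto_one_div_add_atTop_nhds_zero_nat
  have hd0 : ∀ N, 0 < d N := fun N => by simp only [d]; positivity
  let φ : ℕ → ℝ → ℝ := fun N x => √((x + c * d N) ^ 2 + d N ^ 4)
  let g : ℕ → ℝ → ℝ := fun N x => (x + c * d N) / √((x + c * d N) ^ 2 + d N ^ 4)
  have hφpos : ∀ N x, 0 < φ N x := fun N x => by
    have := hd0 N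
    exact Real.sqrt_pos.2 (by positivity)
  have hgc : ∀ N, Continuous (g N) := fun N =>
    Continuous.div (by fun_prop) (by fun_prop) fun x => (hφpos N x).ne'
  have hgb : ∀ N x, |g N x| ≤ 1 := fun N x => by
    have h0 := hφpos N x
    have := hd0 N
    simp only [g, abs_div]
    rw [abs_of_pos h0, div_le_one h0]
    exact Real.abs_le_sqrt (le_add_of_nonneg_right (by positivity))
  have hφ0 : ∀ x, Tendsto (fun N => φ N x) atTop (𝓝 |x|) := fun x => by
    have h1 : Continuous (fun d : ℝ => √((x + c * d) ^ 2 + d ^ 4)) := by fun_prop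
    have h2 := (h1.tendsto 0).comp hd
    rw [show √((x + c * 0) ^ 2 + 0 ^ 4) = |x| by simp [Real.sqrt_sq_eq_abs]] at h2
    exact h2
  have hN : ∀ N, φ N (f t) - φ N (f s) ≤ ∫ u in Set.Ioc s t, g N (f u) * h u ∂κ := fun N =>
    convex_chain hh f0 hf (hgc N) (hgb N) (fun x y => by
      have := hd0 N
      have := sqrt_tangent (d N ^ 4) (x + c * d N) (y + c * d N) (by positivity)
      simpa [φ, g] using this) hst
  refine le_of_tendsto_of_tendsto' ((hφ0 _).sub (hφ0 _)) ?_ hN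
  refine tendsto_integral_of_dominated_convergence (fun u => ‖h u‖) ?_ hh.norm.integrableOn ?_ ?_
  · exact fun N => (((hgc N).measurable.comp hfm).aestronglyMeasurable.mul
      hh.aestronglyMeasurable).restrict
  · refine fun N => ae_of_all _ fun u => ?_
    rw [norm_mul]
    exact mul_le_of_le_one_left (norm_nonneg _) (hgb _ _)
  · exact ae_of_all _ fun u => (sgnAt_smooth_tendsto c (f u) hc).mul_const _

lemma isLocallyFiniteMeasure_add (μ ν : Measure ℝ) [IsLocallyFiniteMeasure μ]
    [IsLocallyFiniteMeasure ν] : IsLocallyFiniteMeasure (μ + ν) :=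
  ⟨fun x => by
    obtain ⟨s, hs, hs'⟩ := μ.finiteAt_nhds x
    obtain ⟨t, ht, ht'⟩ := ν.finiteAt_nhds x
    refine ⟨s ∩ t, inter_mem hs ht, ?_⟩
    rw [Measure.add_apply]
    exact ENNReal.add_lt_top.2 ⟨(measure_mono Set.inter_subset_left).trans_lt hs',
      (measure_mono Set.inter_subset_right).trans_lt ht'⟩⟩

/-- The chain rule inequality for `|f|`, where at zeros of `f` the sign may be chosen depending on
the point, so as to make the integrand `-|h|`. The two inequalities of `abs_chain_const` are
inequalities between measures; the case `c = -1` is used on `{h > 0}` and the case `c = 1` elsewhere.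
-/
lemma abs_chain {κ : Measure ℝ} {h f : ℝ → ℝ} (hhm : Measurable h) (hh : Integrable h κ)
    (f0 : ℝ) (hf : ∀ t, f t = f0 + ∫ u in Set.Iic t, h u ∂κ) {s t : ℝ} (hst : s ≤ t)
    {k : ℝ → ℝ} (hk : IntegrableOn k (Set.Ioc s t) κ)
    (hψ : ∀ᵐ u ∂κ.restrict (Set.Ioc s t),
      (if f u = 0 then -|h u| else SignType.sign (f u) * h u) ≤ k u) :
    |f t| - |f s| ≤ ∫ u in Set.Ioc s t, k u ∂κ := by
  have hfm : Measurable f := by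
    rw [funext hf]; exact (measurable_primitive hh).const_add _
  have hfc : ∀ t, ContinuousWithinAt f (Set.Ici t) t := by
    intro t; rw [funext hf]; exact (rc_primitive hh t).const_add _
  have hint : ∀ c : ℝ, |c| ≤ 1 → Integrable (fun u => sgnAt c (f u) * h u) κ := fun c hc =>
    hh.bdd_mul (c := 1) ((measurable_sgnAt c).comp hfm).aestronglyMeasurable
      (ae_of_all _ fun u => abs_sgnAt_le _ _ hc)
  have hone : |(1 : ℝ)| = 1 := abs_one
  have hmone : |(-1 : ℝ)| = 1 := by simp
  -- `A c` is nondecreasing by `abs_chain_const`, so it defines a positive measure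
  let A : ∀ c : ℝ, |c| = 1 → StieltjesFunction ℝ := fun c hc =>
    { toFun := fun t => (∫ u in Set.Iic t, sgnAt c (f u) * h u ∂κ) - |f t|
      mono' := fun s t hst => by
        have := abs_chain_const hh f0 hf c hc hst
        rw [← primitive_sub (hint c hc.le) hst] at this
        linarith
      right_continuous' := fun t => (rc_primitive (hint c hc.le) t).sub (hfc t).abs }
  have hA : ∀ c hc (a b : ℝ), a ≤ b → A c hc b - A c hc a =
      (∫ u in Set.Ioc a b, sgnAt c (f u) * h u ∂κ) - |f b| + |f a| := fun c hc a b hab => by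
    rw [← primitive_sub (hint c hc.le) hab]
    change (_ - _) - (_ - _) = _
    ring
  -- on the zero set of `f` the integrands for `c = 1` and `c = -1` differ by `2 h = q - r`
  let E : Set ℝ := {u | f u = 0}
  have hE : MeasurableSet E := hfm (measurableSet_singleton 0)
  let q : ℝ → ℝ := E.indicator fun u => 2 * max (h u) 0
  let r : ℝ → ℝ := E.indicator fun u => 2 * max (-h u) 0
  have hq : Integrable q κ := (hh.pos_part.const_mul 2).indicator hE
  have hr : Integrable r κ := (hh.neg_part.const_mul 2).indicator hE
  have hq0 : ∀ u, 0 ≤ q u := fun u => Set.indicator_nonneg (fun _ _ => by positivity) u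
  have hr0 : ∀ u, 0 ≤ r u := fun u => Set.indicator_nonneg (fun _ _ => by positivity) u
  have hqr : ∀ u, sgnAt 1 (f u) * h u + r u = sgnAt (-1) (f u) * h u + q u := fun u => by
    by_cases hu : f u = 0
    · have h1 : q u = 2 * max (h u) 0 := Set.indicator_of_mem (show u ∈ E from hu) _
      have h2 : r u = 2 * max (-h u) 0 := Set.indicator_of_mem (show u ∈ E from hu) _
      have h3 := max_zero_sub_eq_self (h u)
      rw [h1, h2]
      simp only [sgnAt, hu, if_true]
      linarith
    · have h1 : q u = 0 := Set.indicator_of_notMem (show u ∉ E from hu) _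
      have h2 : r u = 0 := Set.indicator_of_notMem (show u ∉ E from hu) _
      simp [sgnAt, hu, h1, h2]
  let Q : Measure ℝ := κ.withDensity fun u => ENNReal.ofReal (q u)
  let S : Measure ℝ := κ.withDensity fun u => ENNReal.ofReal (r u)
  have hQ : ∀ B, MeasurableSet B → Q B = ENNReal.ofReal (∫ u in B, q u ∂κ) := fun B hB => by
    rw [withDensity_apply _ hB, ofReal_integral_eq_lintegral_ofReal hq.integrableOn
      (ae_of_all _ hq0)]
  have hS : ∀ B, MeasurableSet B → S B = ENNReal.ofReal (∫ u in B, r u ∂κ) := fun B hB => by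
    rw [withDensity_apply _ hB, ofReal_integral_eq_lintegral_ofReal hr.integrableOn
      (ae_of_all _ hr0)]
  have : IsFiniteMeasure S := ⟨by rw [hS _ MeasurableSet.univ]; exact ENNReal.ofReal_lt_top⟩
  have : IsFiniteMeasure Q := ⟨by rw [hQ _ MeasurableSet.univ]; exact ENNReal.ofReal_lt_top⟩
  have := isLocallyFiniteMeasure_add (A 1 hone).measure S
  have hmeas : (A 1 hone).measure + S = (A (-1) hmone).measure + Q := by
    refine Measure.ext_of_Ioc _ _ fun a b hab => ?_
    rw [Measure.add_apply, Measure.add_apply, StieltjesFunction.measure_Ioc,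
      StieltjesFunction.measure_Ioc, hS _ measurableSet_Ioc, hQ _ measurableSet_Ioc,
      ← ENNReal.ofReal_add (sub_nonneg.2 ((A 1 hone).mono hab.le))
        (setIntegral_nonneg measurableSet_Ioc fun u _ => hr0 u),
      ← ENNReal.ofReal_add (sub_nonneg.2 ((A (-1) hmone).mono hab.le))
        (setIntegral_nonneg measurableSet_Ioc fun u _ => hq0 u), hA 1 hone _ _ hab.le,
      hA (-1) hmone _ _ hab.le]
    congr 1
    have e : (∫ u in Set.Ioc a b, sgnAt 1 (f u) * h u ∂κ) + ∫ u in Set.Ioc a b, r u ∂κ =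
        (∫ u in Set.Ioc a b, sgnAt (-1) (f u) * h u ∂κ) + ∫ u in Set.Ioc a b, q u ∂κ := by
      rw [← integral_add (hint 1 hone.le).integrableOn hr.integrableOn,
        ← integral_add (hint (-1) hmone.le).integrableOn hq.integrableOn]
      exact integral_congr_ae (ae_of_all _ hqr)
    linarith
  let B : Set ℝ := Set.Ioc s t ∩ {u | 0 < h u}
  have hB : MeasurableSet B := measurableSet_Ioc.inter (measurableSet_lt measurable_const hhm)
  have hSB : S B = 0 := by
    rw [hS _ hB, setIntegral_eq_zero_of_forall_eq_zero, ENNReal.ofReal_zero]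
    intro u hu
    by_cases hu' : u ∈ E
    · have h2 : r u = 2 * max (-h u) 0 := Set.indicator_of_mem hu' _
      rw [h2, max_eq_right (neg_nonpos.2 (le_of_lt hu.2)), mul_zero]
    · exact Set.indicator_of_notMem hu' _
  have hQB : ∫ u in B, q u ∂κ = ∫ u in Set.Ioc s t, q u ∂κ := by
    symm
    refine setIntegral_eq_of_subset_of_forall_sdiff_eq_zero measurableSet_Ioc
      Set.inter_subset_left fun u hu => ?_
    by_cases hu' : u ∈ E
    · have h2 : q u = 2 * max (h u) 0 := Set.indicator_of_mem hu' _
      have : h u ≤ 0 := not_lt.1 fun h' => hu.2 ⟨hu.1, h'⟩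
      rw [h2, max_eq_right this, mul_zero]
    · exact Set.indicator_of_notMem hu' _
  -- on `B` the density `r` vanishes, so there the measure of `A 1` dominates `q dκ`
  have hle : ENNReal.ofReal (∫ u in Set.Ioc s t, q u ∂κ) ≤
      ENNReal.ofReal (A 1 hone t - A 1 hone s) := by
    rw [← StieltjesFunction.measure_Ioc, ← hQB, ← hQ _ hB]
    calc Q B ≤ ((A (-1) hmone).measure + Q) B := by
          rw [Measure.add_apply]; exact le_add_self
      _ = (A 1 hone).measure B := by rw [← hmeas, Measure.add_apply, hSB, add_zero]
      _ ≤ _ := measure_mono Set.inter_subset_left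
  rw [ENNReal.ofReal_le_ofReal_iff (sub_nonneg.2 ((A 1 hone).mono hst)), hA 1 hone _ _ hst] at hle
  have e : (∫ u in Set.Ioc s t, sgnAt 1 (f u) * h u ∂κ) - ∫ u in Set.Ioc s t, q u ∂κ ≤
      ∫ u in Set.Ioc s t, k u ∂κ := by
    rw [← integral_sub (hint 1 hone.le).integrableOn hq.integrableOn]
    refine integral_mono_ae ((hint 1 hone.le).integrableOn.sub hq.integrableOn) hk ?_
    filter_upwards [hψ] with u hu'
    refine le_of_eq_of_le ?_ hu'
    by_cases hu : f u = 0
    · have h1 : q u = 2 * max (h u) 0 := Set.indicator_of_mem (show u ∈ E from hu) _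
      simp only [sgnAt, hu, if_true, h1]
      rcases le_total 0 (h u) with h' | h'
      · rw [abs_of_nonneg h', max_eq_left h']; ring
      · rw [abs_of_nonpos h', max_eq_right h']; ring
    · have h1 : q u = 0 := Set.indicator_of_notMem (show u ∉ E from hu) _
      simp only [sgnAt, hu, if_false, h1, sub_zero]
  linarith

/-! ### Weights and the bound on the total variation -/

/-- The pointwise bound on `d|D_i|`: here `m` is the density of `La - L0`, whose sign is opposite to
that of `D`, and `p` is the routing matrix at the given time. -/
lemma drift_bound {n : ℕ} (p : Matrix (Fin n) (Fin n) ℝ) (hp : ∀ i j, 0 ≤ p i j)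
    (D m : Fin n → ℝ) (i : Fin n) (hpos : 0 < D i → m i ≤ 0) (hneg : D i < 0 → 0 ≤ m i) :
    (if D i = 0 then -|∑ j, (1 - p.transpose) i j * m j|
      else SignType.sign (D i) * ∑ j, (1 - p.transpose) i j * m j) ≤
      -|m i| + ∑ j, p j i * |m j| := by
  have e : ∑ j, (1 - p.transpose) i j * m j = m i - ∑ j, p j i * m j := by
    simp [Matrix.sub_apply, Matrix.one_apply, sub_mul, Finset.sum_sub_distrib]
  have hb : |∑ j, p j i * m j| ≤ ∑ j, p j i * |m j| := by
    refine (Finset.abs_sum_le_sum_abs _ _).trans (Finset.sum_le_sum fun j _ => ?_)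
    rw [abs_mul, abs_of_nonneg (hp j i)]
  rw [e]
  have hb' := abs_le.1 hb
  rcases lt_trichotomy (D i) 0 with h | h | h
  · rw [if_neg h.ne, sign_neg h, abs_of_nonneg (hneg h)]
    simp only [SignType.coe_neg_one]
    linarith
  · rw [if_pos h]
    have := abs_sub_abs_le_abs_sub (m i) (∑ j, p j i * m j)
    linarith
  · rw [if_neg h.ne', sign_pos h, abs_of_nonpos (hpos h)]
    simp only [SignType.coe_one]
    linarith

lemma weighted_bound {n : ℕ} (p : Matrix (Fin n) (Fin n) ℝ) (v m : Fin n → ℝ)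
    (hv : ∀ j, ∑ i, p j i * v i ≤ v j - 1 / 2) :
    ∑ i, v i * (-|m i| + ∑ j, p j i * |m j|) ≤ -(1 / 2) * ∑ j, |m j| := by
  have e : ∑ i, v i * (-|m i| + ∑ j, p j i * |m j|) =
      ∑ j, (-v j + ∑ i, p j i * v i) * |m j| := by
    simp only [mul_add, add_mul, Finset.sum_add_distrib, Finset.mul_sum, Finset.sum_mul]
    rw [Finset.sum_comm (f := fun i j => v i * (p j i * |m j|))]
    congr 1
    · exact Finset.sum_congr rfl fun i _ => by ring
    · exact Finset.sum_congr rfl fun i _ => Finset.sum_congr rfl fun j _ => by ring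
  rw [e, Finset.mul_sum]
  refine Finset.sum_le_sum fun j _ => mul_le_mul_of_nonneg_right ?_ (abs_nonneg _)
  linarith [hv j]

/-- If `Q ≥ 0` has powers tending to `0`, then `v = (1 + Q + ⋯ + Q ^ (K - 1)) 1` with `K` large
satisfies `Q v ≤ v - 1 / 2`, since `Q v - v = Q ^ K 1 - 1`. -/
lemma exists_weight {n : ℕ} (Q : Matrix (Fin n) (Fin n) ℝ) (hQ : ∀ i j, 0 ≤ Q i j)
    (hlim : Tendsto (fun k : ℕ => Q ^ k) atTop (𝓝 0)) :
    ∃ v : Fin n → ℝ, (∀ i, 0 ≤ v i) ∧ ∀ j, ∑ i, Q j i * v i ≤ v j - 1 / 2 := by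
  have h1 : Tendsto (fun k : ℕ => (Q ^ k).mulVec 1) atTop (𝓝 0) := by
    have hc : Continuous fun M : Matrix (Fin n) (Fin n) ℝ => M.mulVec (1 : Fin n → ℝ) := by
      fun_prop
    have := (hc.tendsto 0).comp hlim
    rwa [Matrix.zero_mulVec] at this
  have h2 : ∀ᶠ k : ℕ in atTop, ∀ i, ((Q ^ k).mulVec 1) i ≤ 1 / 2 := by
    refine eventually_all.2 fun i => ?_
    have := (tendsto_pi_nhds.1 h1 i).eventually_lt_const (show (0 : Fin n → ℝ) i < 1 / 2 by simp)
    exact this.mono fun _ h => h.le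
  obtain ⟨K, hK⟩ := h2.exists
  have hpow : ∀ k : ℕ, 0 ≤ (Q ^ k).mulVec 1 := fun k => by
    induction k with
    | zero => simp
    | succ k ih =>
      rw [pow_succ', ← Matrix.mulVec_mulVec]
      intro i
      change 0 ≤ ∑ j, Q i j * ((Q ^ k).mulVec 1) j
      exact Finset.sum_nonneg fun j _ => mul_nonneg (hQ i j) (ih j)
  refine ⟨∑ k ∈ Finset.range K, (Q ^ k).mulVec 1, fun i => ?_, fun j => ?_⟩
  · rw [Finset.sum_apply]
    exact Finset.sum_nonneg fun k _ => hpow k i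
  · have e : Q.mulVec (∑ k ∈ Finset.range K, (Q ^ k).mulVec 1) -
        ∑ k ∈ Finset.range K, (Q ^ k).mulVec 1 = (Q ^ K).mulVec 1 - 1 := by
      have := Finset.sum_range_sub (fun k => (Q ^ k).mulVec (1 : Fin n → ℝ)) K
      rw [pow_zero, Matrix.one_mulVec, Finset.sum_sub_distrib] at this
      rw [← this, Matrix.mulVec_sum]
      simp only [pow_succ', Matrix.mulVec_mulVec]
    have e' := congrFun e j
    have := hK j
    simp only [Pi.sub_apply, Pi.one_apply] at e'
    change Q.mulVec (∑ k ∈ Finset.range K, (Q ^ k).mulVec 1) j ≤ _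
    linarith

lemma isLocallyFiniteMeasure_sum {ι : Type*} (s : Finset ι) (μ : ι → Measure ℝ)
    [∀ i, IsLocallyFiniteMeasure (μ i)] : IsLocallyFiniteMeasure (∑ i ∈ s, μ i) := by
  classical
  induction s using Finset.induction_on with
  | empty => rw [Finset.sum_empty]; infer_instance
  | insert i s hi ih =>
    rw [Finset.sum_insert hi]
    exact isLocallyFiniteMeasure_add _ _

/-- If `D = a + ∫ R d(μ - ν)`, where `μ j` charges only times with `D j ≤ 0` and `ν j` only times
with `D j ≥ 0`, then `μ - ν` has finite total variation on `(0, ∞)`, and so `D` converges. -/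
theorem exists_limit {n : ℕ} (μ ν : Fin n → Measure ℝ)
    [∀ j, IsLocallyFiniteMeasure (μ j)] [∀ j, IsLocallyFiniteMeasure (ν j)]
    (p : ℝ → Matrix (Fin n) (Fin n) ℝ) (hpm : ∀ i j, Measurable fun u => p u i j)
    (Q : Matrix (Fin n) (Fin n) ℝ) (hp0 : ∀ u i j, 0 ≤ p u i j) (hpQ : ∀ u i j, p u i j ≤ Q i j)
    (hQ : Tendsto (fun k : ℕ => Q ^ k) atTop (𝓝 0))
    (a : Fin n → ℝ) (D : ℝ → Fin n → ℝ)
    (hD : ∀ t, 0 ≤ t → ∀ i, D t i = a i +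
      ((∑ j, ∫ u in Set.Ioc 0 t, (1 - (p u).transpose) i j ∂(μ j)) -
        ∑ j, ∫ u in Set.Ioc 0 t, (1 - (p u).transpose) i j ∂(ν j)))
    (hμ : ∀ j, ∀ᵐ u ∂(μ j), 0 ≤ u → D u j ≤ 0)
    (hν : ∀ j, ∀ᵐ u ∂(ν j), 0 ≤ u → 0 ≤ D u j) :
    ∃ d, Tendsto D atTop (𝓝 d) := by
  obtain ⟨v, hv0, hvQ⟩ := exists_weight Q (fun i j => (hp0 0 i j).trans (hpQ 0 i j)) hQ
  have hv : ∀ u j, ∑ i, p u j i * v i ≤ v j - 1 / 2 := fun u j =>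
    (Finset.sum_le_sum fun i _ => mul_le_mul_of_nonneg_right (hpQ u j i) (hv0 i)).trans (hvQ j)
  let κ : Measure ℝ := (∑ j, μ j) + ∑ j, ν j
  have : IsLocallyFiniteMeasure (∑ j, μ j) := isLocallyFiniteMeasure_sum _ _
  have : IsLocallyFiniteMeasure (∑ j, ν j) := isLocallyFiniteMeasure_sum _ _
  have : IsLocallyFiniteMeasure κ := isLocallyFiniteMeasure_add _ _
  have hμκ : ∀ j, μ j ≤ κ := fun j =>
    (Finset.single_le_sum (f := μ) (fun _ _ => Measure.zero_le _) (Finset.mem_univ j)).trans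
      (Measure.le_add_right le_rfl)
  have hνκ : ∀ j, ν j ≤ κ := fun j =>
    (Finset.single_le_sum (f := ν) (fun _ _ => Measure.zero_le _) (Finset.mem_univ j)).trans
      (Measure.le_add_left le_rfl)
  -- densities of all the measures with respect to the common dominating measure `κ`
  let ρ : Fin n → ℝ → ℝ := fun j u => ((μ j).rnDeriv κ u).toReal
  let η : Fin n → ℝ → ℝ := fun j u => ((ν j).rnDeriv κ u).toReal
  have hbd : ∀ (α : Measure ℝ), α ≤ κ → ∀ T, IntegrableOn (fun u => (α.rnDeriv κ u).toReal)
      (Set.Ioc 0 T) κ := by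
    intro α hα T
    refine Measure.integrableOn_of_bounded (M := 1) measure_Ioc_lt_top.ne
      (α.measurable_rnDeriv κ).ennreal_toReal.aestronglyMeasurable ?_
    refine ae_restrict_of_ae ?_
    filter_upwards [Measure.rnDeriv_le_one_of_le hα] with u hu
    rw [Real.norm_of_nonneg ENNReal.toReal_nonneg]
    exact ENNReal.toReal_le_of_le_ofReal zero_le_one (by simpa using hu)
  let m : Fin n → ℝ → ℝ := fun j u => ρ j u - η j u
  have hmm : ∀ j, Measurable (m j) := fun j =>
    ((μ j).measurable_rnDeriv κ).ennreal_toReal.sub ((ν j).measurable_rnDeriv κ).ennreal_toReal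
  have hmi : ∀ j T, IntegrableOn (m j) (Set.Ioc 0 T) κ := fun j T =>
    (hbd _ (hμκ j) T).sub (hbd _ (hνκ j) T)
  let r : Fin n → Fin n → ℝ → ℝ := fun i j u => (1 - (p u).transpose) i j
  have hrm : ∀ i j, Measurable (r i j) := fun i j => measurable_const.sub (hpm j i)
  have hrb : ∀ i j u, ‖r i j u‖ ≤ 1 + Q j i := fun i j u => by
    have h0 := hp0 u j i
    have h1 := hpQ u j i
    have h2 : r i j u = (if i = j then 1 else 0) - p u j i := by
      simp [r, Matrix.sub_apply, Matrix.one_apply]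
    rw [h2, Real.norm_eq_abs, abs_le]
    split_ifs <;> constructor <;> linarith
  have hri : ∀ (f : ℝ → ℝ) (S : Set ℝ) i j, IntegrableOn f S κ →
      IntegrableOn (fun u => r i j u * f u) S κ := fun f S i j hf =>
    hf.bdd_mul (c := 1 + Q j i) (hrm i j).aestronglyMeasurable (ae_of_all _ (hrb i j))
  let h : Fin n → ℝ → ℝ := fun i u => ∑ j, r i j u * m j u
  have hhm : ∀ i, Measurable (h i) := fun i =>
    Finset.measurable_sum _ fun j _ => (hrm i j).mul (hmm j)
  have hhi : ∀ i (S : Set ℝ), (∀ j, IntegrableOn (m j) S κ) → IntegrableOn (h i) S κ :=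
    fun i S hS => integrable_finsetSum _ fun j _ => hri _ S i j (hS j)
  have hDh : ∀ t, 0 ≤ t → ∀ i, D t i = a i + ∫ u in Set.Ioc 0 t, h i u ∂κ := by
    intro t ht i
    rw [hD t ht i]
    congr 1
    have e1 : ∀ j, ∫ u in Set.Ioc 0 t, (1 - (p u).transpose) i j ∂(μ j) =
        ∫ u in Set.Ioc 0 t, r i j u * ρ j u ∂κ := fun j => by
      rw [← setIntegral_toReal_rnDeriv_mul (Measure.absolutelyContinuous_of_le (hμκ j))
        measurableSet_Ioc]
      exact integral_congr_ae (ae_of_all _ fun u => mul_comm _ _)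
    have e2 : ∀ j, ∫ u in Set.Ioc 0 t, (1 - (p u).transpose) i j ∂(ν j) =
        ∫ u in Set.Ioc 0 t, r i j u * η j u ∂κ := fun j => by
      rw [← setIntegral_toReal_rnDeriv_mul (Measure.absolutelyContinuous_of_le (hνκ j))
        measurableSet_Ioc]
      exact integral_congr_ae (ae_of_all _ fun u => mul_comm _ _)
    rw [integral_finsetSum _ fun j _ => hri _ _ i j (hmi j t), ← Finset.sum_sub_distrib]
    refine Finset.sum_congr rfl fun j _ => ?_
    rw [e1, e2, ← integral_sub (hri _ _ i j (hbd _ (hμκ j) t)) (hri _ _ i j (hbd _ (hνκ j) t))]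
    exact integral_congr_ae (ae_of_all _ fun u => (mul_sub _ _ _).symm)
  have hρ0 : ∀ j, ∀ᵐ u ∂κ, ρ j u ≠ 0 → 0 ≤ u → D u j ≤ 0 := fun j => by
    have := hμ j
    rw [← Measure.withDensity_rnDeriv_eq _ _ (Measure.absolutelyContinuous_of_le (hμκ j)),
      ae_withDensity_iff ((μ j).measurable_rnDeriv κ)] at this
    exact this.mono fun u hu h => hu fun h' => h (by simp [ρ, h'])
  have hη0 : ∀ j, ∀ᵐ u ∂κ, η j u ≠ 0 → 0 ≤ u → 0 ≤ D u j := fun j => by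
    have := hν j
    rw [← Measure.withDensity_rnDeriv_eq _ _ (Measure.absolutelyContinuous_of_le (hνκ j)),
      ae_withDensity_iff ((ν j).measurable_rnDeriv κ)] at this
    exact this.mono fun u hu h => hu fun h' => h (by simp [η, h'])
  have hsgn : ∀ j, ∀ᵐ u ∂κ, 0 ≤ u → (0 < D u j → m j u ≤ 0) ∧ (D u j < 0 → 0 ≤ m j u) := by
    intro j
    filter_upwards [hρ0 j, hη0 j] with u h1 h2 hu
    have g1 : 0 ≤ ρ j u := ENNReal.toReal_nonneg
    have g2 : 0 ≤ η j u := ENNReal.toReal_nonneg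
    refine ⟨fun h => ?_, fun h => ?_⟩
    · have : ρ j u = 0 := by
        by_contra h'
        exact absurd (h1 h' hu) (not_le.2 h)
      simp only [m]; linarith
    · have : η j u = 0 := by
        by_contra h'
        exact absurd (h2 h' hu) (not_le.2 h)
      simp only [m]; linarith
  -- the total variation of `μ - ν` on `(0, T]` is bounded independently of `T`
  have hvar : ∀ T, 0 ≤ T → ∫ u in Set.Ioc 0 T, ∑ j, |m j u| ∂κ ≤ 2 * ∑ i, v i * |a i| := by
    intro T hT
    let k : Fin n → ℝ → ℝ := fun i u => -|m i u| + ∑ j, p u j i * |m j u|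
    have hki : ∀ i, IntegrableOn (k i) (Set.Ioc 0 T) κ := fun i => by
      refine (hmi i T).abs.neg.add (integrable_finsetSum _ fun j _ => ?_)
      refine (hmi j T).abs.bdd_mul (c := Q j i) (hpm j i).aestronglyMeasurable
        (ae_of_all _ fun u => ?_)
      rw [Real.norm_of_nonneg (hp0 u j i)]
      exact hpQ u j i
    have hi : ∀ i, |D T i| - |a i| ≤ ∫ u in Set.Ioc 0 T, k i u ∂κ := by
      intro i
      -- restricting `κ` to `(0, T]` makes `h i` globally integrable, as `abs_chain` requires
      let f : ℝ → ℝ := fun t => a i + ∫ u in Set.Iic t, h i u ∂(κ.restrict (Set.Ioc 0 T))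
      have hfD : ∀ t ∈ Set.Icc 0 T, f t = D t i := fun t ht => by
        rw [hDh t ht.1 i]
        simp only [f]
        rw [Measure.restrict_restrict measurableSet_Iic]
        congr 3
        ext u
        simp only [Set.mem_inter_iff, Set.mem_Iic, Set.mem_Ioc]
        exact ⟨fun ⟨h1, h2, _⟩ => ⟨h2, h1⟩, fun ⟨h1, h2⟩ => ⟨h2, h1, h2.trans ht.2⟩⟩
      have e : (κ.restrict (Set.Ioc 0 T)).restrict (Set.Ioc 0 T) = κ.restrict (Set.Ioc 0 T) := by
        rw [Measure.restrict_restrict measurableSet_Ioc, Set.inter_self]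
      have key := abs_chain (κ := κ.restrict (Set.Ioc 0 T)) (f := f) (hhm i)
        (hhi i _ fun j => hmi j T) (a i) (fun _ => rfl) hT (k := k i)
        (by rw [IntegrableOn, e]; exact hki i)
        (by
          rw [e]
          filter_upwards [ae_restrict_of_ae (hsgn i), ae_restrict_mem measurableSet_Ioc]
            with u hu hu'
          rw [hfD u ⟨hu'.1.le, hu'.2⟩]
          exact drift_bound (p u) (hp0 u) (D u) (fun j => m j u) i (hu hu'.1.le).1
            (hu hu'.1.le).2)
      rw [e, hfD T ⟨hT, le_rfl⟩, hfD 0 ⟨le_rfl, hT⟩, hDh 0 le_rfl i] at key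
      simpa using key
    have h1 : ∑ i, v i * (|D T i| - |a i|) ≤ ∑ i, v i * ∫ u in Set.Ioc 0 T, k i u ∂κ :=
      Finset.sum_le_sum fun i _ => mul_le_mul_of_nonneg_left (hi i) (hv0 i)
    have h2 : ∑ i, v i * ∫ u in Set.Ioc 0 T, k i u ∂κ ≤
        -(1 / 2) * ∫ u in Set.Ioc 0 T, ∑ j, |m j u| ∂κ := by
      simp_rw [← integral_const_mul]
      rw [← integral_finsetSum _ fun i _ => (hki i).const_mul (v i)]
      refine integral_mono (integrable_finsetSum _ fun i _ => (hki i).const_mul (v i))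
        ((integrable_finsetSum _ fun j _ => (hmi j T).abs).const_mul _) fun u => ?_
      exact weighted_bound (p u) v (fun j => m j u) (hv u)
    have h3 : 0 ≤ ∑ i, v i * |D T i| :=
      Finset.sum_nonneg fun i _ => mul_nonneg (hv0 i) (abs_nonneg _)
    simp only [mul_sub, Finset.sum_sub_distrib] at h1
    linarith
  have hmI : ∀ j, IntegrableOn (m j) (Set.Ioi 0) κ := by
    have hs : IntegrableOn (fun u => ∑ j, |m j u|) (Set.Ioi 0) κ := by
      refine integrableOn_Ioi_of_intervalIntegral_norm_bounded (l := atTop) (b := id)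
        (2 * ∑ i, v i * |a i|) 0 (fun T => integrable_finsetSum _ fun j _ => (hmi j T).abs)
        tendsto_id ?_
      filter_upwards [eventually_ge_atTop 0] with T hT
      rw [id, intervalIntegral.integral_of_le hT]
      refine le_trans (le_of_eq ?_) (hvar T hT)
      refine integral_congr_ae (ae_of_all _ fun u => ?_)
      exact Real.norm_of_nonneg (Finset.sum_nonneg fun j _ => abs_nonneg _)
    intro j
    refine hs.mono' (hmm j).aestronglyMeasurable (ae_of_all _ fun u => ?_)
    exact Finset.single_le_sum (f := fun j => |m j u|) (fun _ _ => abs_nonneg _)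
      (Finset.mem_univ j)
  refine ⟨fun i => a i + ∫ u in Set.Ioi 0, h i u ∂κ, tendsto_pi_nhds.2 fun i => ?_⟩
  have := (intervalIntegral_tendsto_integral_Ioi 0 (hhi i _ hmI) tendsto_id).const_add (a i)
  refine this.congr' ?_
  filter_upwards [eventually_ge_atTop 0] with t ht
  rw [hDh t ht i, id, intervalIntegral.integral_of_le ht]

/-! ### The regulators of a solution pair -/

section Solution

variable {n : ℕ} {b : ℝ → (Fin n → ℝ) → (Fin n → ℝ) → Fin n → ℝ}
  {R : ℝ → (Fin n → ℝ) → (Fin n → ℝ) → Matrix (Fin n) (Fin n) ℝ} {X W L : ℝ → Fin n → ℝ}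

lemma IsSolutionPairBR.monotone_extZero (hs : IsSolutionPairBR b R X W L) (i : Fin n) :
    Monotone (extZero fun t => L t i) := by
  intro s t hst
  unfold extZero
  split_ifs with h1 h2 h2
  · exact le_rfl
  · exact hs.nonnegL i t (not_lt.1 h2)
  · exact absurd (hst.trans_lt h2) h1
  · exact hs.monoL i (not_lt.1 h1) (not_lt.1 h2) hst

lemma IsSolutionPairBR.rc_extZero (hs : IsSolutionPairBR b R X W L) (i : Fin n) (x : ℝ) :
    ContinuousWithinAt (extZero fun t => L t i) (Set.Ici x) x := by
  rcases lt_or_ge x 0 with hx | hx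
  · refine ContinuousAt.continuousWithinAt ?_
    refine (continuousAt_const (y := (0 : ℝ))).congr ?_
    filter_upwards [Iio_mem_nhds hx] with u hu
    exact (if_pos hu).symm
  · refine (hs.rcL i x hx).congr (fun u hu => ?_) ?_
    · exact if_neg (not_lt.2 (hx.trans hu))
    · exact if_neg (not_lt.2 hx)

lemma IsSolutionPairBR.lsMeasure_eq (hs : IsSolutionPairBR b R X W L) (i : Fin n) :
    lsMeasure (extZero fun t => L t i) =
      StieltjesFunction.measure ⟨_, hs.monotone_extZero i, hs.rc_extZero i⟩ :=
  dif_pos ⟨hs.monotone_extZero i, hs.rc_extZero i⟩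

lemma IsSolutionPairBR.locallyFinite (hs : IsSolutionPairBR b R X W L) (i : Fin n) :
    IsLocallyFiniteMeasure (lsMeasure (extZero fun t => L t i)) := by
  rw [hs.lsMeasure_eq i]; infer_instance

lemma IsSolutionPairBR.lsMeasure_Ioc (hs : IsSolutionPairBR b R X W L) (i : Fin n) {s t : ℝ}
    (h0 : 0 ≤ s) (hst : s ≤ t) :
    lsMeasure (extZero fun t => L t i) (Set.Ioc s t) = ENNReal.ofReal (L t i - L s i) := by
  rw [hs.lsMeasure_eq i, StieltjesFunction.measure_Ioc]
  congr 2
  · exact if_neg (not_lt.2 (h0.trans hst))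
  · exact if_neg (not_lt.2 h0)

end Solution

/-- If the free process `X_i + ∫ b_i` is unbounded below, then `W_i` vanishes at arbitrarily large
times. Indeed `W_i ≤ X_i + ∫ b_i + L_i` because the off-diagonal entries of `R` are nonpositive, so
`L_i` is unbounded; but `L_i` is constant on any time interval on which `W_i > 0`. -/
lemma frequently_zero {n : ℕ} {b : ℝ → (Fin n → ℝ) → (Fin n → ℝ) → Fin n → ℝ}
    {P : ℝ → (Fin n → ℝ) → (Fin n → ℝ) → Matrix (Fin n) (Fin n) ℝ} {X W L : ℝ → Fin n → ℝ}
    (hb_time : ∀ s (ℓ ℓ' w w' : Fin n → ℝ), b s ℓ w = b s ℓ' w')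
    (hP_time : ∀ s (ℓ ℓ' w w' : Fin n → ℝ), P s ℓ w = P s ℓ' w')
    (hP0 : ∀ s, 0 ≤ s → ∀ i j, 0 ≤ P s 0 0 i j) (hPd : ∀ s, 0 ≤ s → ∀ i, P s 0 0 i i = 0)
    (hs : IsSolutionPairBR b (RofP P) X W L) (i : Fin n)
    (hunb : ∀ B : ℝ, ∃ t, 0 ≤ t ∧ X t i + ∫ u in Set.Ioc (0 : ℝ) t, b u 0 0 i < -B) :
    ∃ᶠ t in atTop, 0 ≤ t ∧ W t i = 0 := by
  have hR : ∀ u (ℓ w : Fin n → ℝ) j, RofP P u ℓ w i j =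
      (if i = j then 1 else 0) - P u 0 0 j i := fun u ℓ w j => by
    simp [RofP, Matrix.one_apply, hP_time u ℓ 0 w 0]
  have hW : ∀ t, 0 ≤ t → W t i ≤ (X t i + ∫ u in Set.Ioc (0 : ℝ) t, b u 0 0 i) + L t i := by
    intro t ht
    rw [hs.eqn t ht i]
    have e1 : ∫ u in Set.Ioc (0 : ℝ) t, b u (Function.leftLim L u) (Function.leftLim W u) i =
        ∫ u in Set.Ioc (0 : ℝ) t, b u 0 0 i :=
      integral_congr_ae (ae_of_all _ fun u => congrFun (hb_time u _ _ _ _) i)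
    rw [e1]
    gcongr
    have e2 : ∀ j, ∫ u in Set.Ioc (0 : ℝ) t,
        RofP P u (Function.leftLim L u) (Function.leftLim W u) i j
          ∂(lsMeasure (extZero fun s => L s j)) ≤ if i = j then L t i else 0 := by
      intro j
      split_ifs with hij
      · subst hij
        have e3 : ∫ u in Set.Ioc (0 : ℝ) t,
            RofP P u (Function.leftLim L u) (Function.leftLim W u) i i
              ∂(lsMeasure (extZero fun s => L s i)) = ∫ u in Set.Ioc (0 : ℝ) t, (1 : ℝ)
              ∂(lsMeasure (extZero fun s => L s i)) :=
          setIntegral_congr_fun measurableSet_Ioc fun u hu => by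
            simp [hR, hPd u hu.1.le]
        rw [e3, setIntegral_const, Measure.real, hs.lsMeasure_Ioc i le_rfl ht,
          ENNReal.toReal_ofReal (sub_nonneg.2 (hs.monoL i Set.self_mem_Ici ht ht))]
        have := hs.nonnegL i 0 le_rfl
        simpa using this
      · refine setIntegral_nonpos measurableSet_Ioc fun u hu => ?_
        rw [hR, if_neg hij]
        have := hP0 u hu.1.le j i
        linarith
    refine (Finset.sum_le_sum fun j _ => e2 j).trans (le_of_eq ?_)
    simp
  intro hev
  obtain ⟨T, hT⟩ := eventually_atTop.1 hev
  have hpos : ∀ t, max T 0 ≤ t → 0 < W t i := fun t ht => by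
    have h0 : 0 ≤ t := (le_max_right _ _).trans ht
    exact lt_of_le_of_ne (hs.nonnegW i t h0)
      fun h => hT t ((le_max_left _ _).trans ht) (And.intro h0 h.symm)
  -- beyond the last zero of `W_i` the regulator `L_i` no longer increases
  have hL : ∀ t, 0 ≤ t → L t i ≤ L (max T 0) i := by
    intro t ht
    have hT0 : 0 ≤ max T 0 := le_max_right _ _
    rcases le_total t (max T 0) with h | h
    · exact hs.monoL i ht hT0 h
    · have h1 := hs.lsMeasure_Ioc i hT0 h
      have h2 : lsMeasure (extZero fun t => L t i) (Set.Ioc (max T 0) t) = 0 :=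
        measure_mono_null (t := {t : ℝ | 0 ≤ t ∧ 0 < W t i})
          (fun u hu => And.intro (hT0.trans hu.1.le) (hpos u hu.1.le)) (hs.flat i)
      rw [h2] at h1
      have := ENNReal.ofReal_eq_zero.1 h1.symm
      linarith
  obtain ⟨t, ht, ht'⟩ := hunb (L (max T 0) i)
  have h1 := hW t ht
  have h2 := hs.nonnegW i t ht
  have h3 := hL t ht
  linarith

/-! ### Convergence of the difference of the two solutions -/

/-- Theorem 3.3: time-only coefficients; if liminf (X_i(t) + ∫₀ᵗ b_i(s) ds) = -∞ for
every i, then Wᵃ(t) - W⁰(t) → 0 for every a ≥ 0. -/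
theorem time_dependent_coefficients_insensitivity
    {n : ℕ} (hn : 0 < n)
    (b : ℝ → (Fin n → ℝ) → (Fin n → ℝ) → Fin n → ℝ)
    (P : ℝ → (Fin n → ℝ) → (Fin n → ℝ) → Matrix (Fin n) (Fin n) ℝ)
    (hA : HypA b P)
    (hb_time : ∀ s (ℓ ℓ' w w' : Fin n → ℝ), b s ℓ w = b s ℓ' w')
    (hP_time : ∀ s (ℓ ℓ' w w' : Fin n → ℝ), P s ℓ w = P s ℓ' w')
    (X : ℝ → Fin n → ℝ) (hX : Cadlag X)
    (hliminf : ∀ i : Fin n, Filter.liminf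
      (fun t => ((X t i + ∫ s in Set.Ioc (0 : ℝ) t, b s 0 0 i : ℝ) : EReal))
      Filter.atTop = ⊥) :
    ∀ (a : Fin n → ℝ) (Wa La W0 L0 : ℝ → Fin n → ℝ), 0 ≤ a →
      IsSolutionPairBR b (RofP P) (fun t => a + X t) Wa La →
      IsSolutionPairBR b (RofP P) X W0 L0 →
      Filter.Tendsto (fun t => Wa t - W0 t) Filter.atTop (nhds 0) := by
  intro a Wa La W0 L0 _ hsa hs0
  obtain ⟨Q, hPQ, hQ⟩ := hA.unif_spectral
  have hdom : ∀ s : ℝ, 0 ≤ s → (s, (0 : Fin n → ℝ), (0 : Fin n → ℝ)) ∈ NonnegDom n :=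
    fun s hs => ⟨hs, le_rfl, le_rfl⟩
  have hP0 : ∀ s, 0 ≤ s → ∀ i j, 0 ≤ P s 0 0 i j := fun s hs => hA.P_nonneg s 0 0 (hdom s hs)
  have hPd : ∀ s, 0 ≤ s → ∀ i, P s 0 0 i i = 0 := fun s hs => hA.P_diag s 0 0 (hdom s hs)
  -- nothing is assumed about `P` at negative times, so freeze it there
  let p : ℝ → Matrix (Fin n) (Fin n) ℝ := fun u => P (max u 0) 0 0
  have hpm : ∀ i j, Measurable fun u => p u i j := by
    intro i j
    have h1 : Continuous p := by
      have := hA.P_cont.comp_continuous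
        (f := fun u : ℝ => (max u 0, (0 : Fin n → ℝ), (0 : Fin n → ℝ))) (by fun_prop)
        fun u => hdom _ (le_max_right _ _)
      exact this
    exact (h1.matrix_elem i j).measurable
  have hRp : ∀ u, 0 < u → ∀ (ℓ w : Fin n → ℝ) i j,
      RofP P u ℓ w i j = (1 - (p u).transpose) i j := fun u hu ℓ w i j => by
    simp only [RofP, p, max_eq_left hu.le, hP_time u ℓ 0 w 0]
  have := hsa.locallyFinite
  have := hs0.locallyFinite
  obtain ⟨d, hd⟩ := exists_limit (fun j => lsMeasure (extZero fun s => La s j))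
    (fun j => lsMeasure (extZero fun s => L0 s j)) p hpm Q
    (fun u => hP0 _ (le_max_right _ _)) (fun u => hPQ _ 0 0 (hdom _ (le_max_right _ _))) hQ a
    (fun t => Wa t - W0 t) (by
      intro t ht i
      have e : ∀ (L W : ℝ → Fin n → ℝ) j, ∫ u in Set.Ioc (0 : ℝ) t,
          RofP P u (Function.leftLim L u) (Function.leftLim W u) i j
            ∂(lsMeasure (extZero fun s => L s j)) = ∫ u in Set.Ioc (0 : ℝ) t,
          (1 - (p u).transpose) i j ∂(lsMeasure (extZero fun s => L s j)) := fun L W j =>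
        setIntegral_congr_fun measurableSet_Ioc fun u hu => hRp u hu.1 _ _ _ _
      have eb : ∫ u in Set.Ioc (0 : ℝ) t,
          b u (Function.leftLim La u) (Function.leftLim Wa u) i = ∫ u in Set.Ioc (0 : ℝ) t,
          b u (Function.leftLim L0 u) (Function.leftLim W0 u) i :=
        integral_congr_ae (ae_of_all _ fun u => congrFun (hb_time u _ _ _ _) i)
      simp only [Pi.sub_apply]
      rw [hsa.eqn t ht i, hs0.eqn t ht i, eb]
      simp only [e, Pi.add_apply]
      ring)
    (by
      intro j
      have h0 := hs0.nonnegW j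
      refine (measure_eq_zero_iff_ae_notMem.1 (hsa.flat j)).mono fun u hu hu0 => ?_
      have h1 : Wa u j ≤ 0 := not_lt.1 fun h => hu ⟨hu0, h⟩
      simpa using h1.trans (h0 u hu0))
    (by
      intro j
      have h0 := hsa.nonnegW j
      refine (measure_eq_zero_iff_ae_notMem.1 (hs0.flat j)).mono fun u hu hu0 => ?_
      have h1 : W0 u j ≤ 0 := not_lt.1 fun h => hu ⟨hu0, h⟩
      simpa using h1.trans (h0 u hu0))
  have hunb : ∀ i, ∀ B : ℝ, ∃ t, 0 ≤ t ∧ X t i + ∫ u in Set.Ioc (0 : ℝ) t, b u 0 0 i < -B := by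
    intro i B
    by_contra! hcon
    have h1 : ((-B : ℝ) : EReal) ≤ Filter.liminf
        (fun t => ((X t i + ∫ s in Set.Ioc (0 : ℝ) t, b s 0 0 i : ℝ) : EReal)) atTop := by
      refine le_liminf_of_le (by isBoundedDefault) ?_
      filter_upwards [eventually_ge_atTop 0] with t ht
      exact EReal.coe_le_coe_iff.2 (hcon t ht)
    rw [hliminf i] at h1
    exact EReal.coe_ne_bot _ (le_bot_iff.1 h1)
  have hd0 : d = 0 := by
    funext i
    have hdi := tendsto_pi_nhds.1 hd i
    refine le_antisymm ?_ ?_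
    · have hfr := frequently_zero hb_time hP_time hP0 hPd hsa i fun B => by
        obtain ⟨t, ht, ht'⟩ := hunb i (B + a i)
        refine ⟨t, ht, ?_⟩
        simp only [Pi.add_apply]
        linarith
      refine le_of_tendsto_of_frequently hdi (hfr.mono fun t ht => ?_)
      simpa [ht.2] using hs0.nonnegW i t ht.1
    · have hfr := frequently_zero hb_time hP_time hP0 hPd hs0 i (hunb i)
      refine ge_of_tendsto_of_frequently hdi (hfr.mono fun t ht => ?_)
      simpa [ht.2] using hsa.nonnegW i t ht.1
  rw [← hd0]
  exact hd
end
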